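/- arXiv:1507.04132 — 4 statements merged into one kernel-verified Lean document; each statement's English description precedes it below -/
import Mathlib

section
/- Let T be a totally ergodic automorphism of a standard Borel probability space (X,μ) and let k ≥ 1. Let f : X → ℂ be such that there exist measurable f₀, …, f_k with |f_j| = 1 a.e., f_k = f, f_j∘T = f_{j-1}·f_j a.e. for 1 ≤ j ≤ k, and f₀ the constant c with |c| = 1 and cⁿ ≠ 1 for all integers n ≠ 0 (i.e., f ∈ E_k(T) \ E_{k-1}(T)). Let g : X → ℂ be such that there exist measurable g₀, …, g_k with |g_j| = 1 a.e., g_k = g, g_j∘T = g_{j-1}·g_j a.e. for 1 ≤ j ≤ k, and g₀ a constant of modulus 1 (i.e., g ∈ E_k(T)). Then there exists at most one pair (r,s) of coprime positive integers for which there exists an ergodic joining ρ of T^r and T^s with ∫_{X×X} f(x) conj(g(y)) dρ(x,y) ≠ 0. -/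
open MeasureTheory Filter

/-- `T` is totally ergodic: every nonzero power of `T` is ergodic. -/
def TotallyErgodic {X : Type*} [MeasurableSpace X] (T : X → X) (μ : Measure X) : Prop :=
  ∀ m : ℕ, m ≠ 0 → Ergodic (T^[m]) μ

/-- `h` is a quasi-eigenfunction of order `j` for `S`: the `j`-fold multiplicative difference of `h`
along `S` is almost everywhere equal to the constant `c`. -/
def IsQuasiEigenfunction {Y : Type*} [MeasurableSpace Y] (S : Y → Y) (ν : Measure Y) :
    ℕ → ℂ → (Y → ℂ) → Prop
  | 0, c, h => ∀ᵐ y ∂ν, h y = c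
  | j + 1, c, h =>
    IsQuasiEigenfunction S ν j c (fun y => h (S y) * (starRingEnd ℂ) (h y))

namespace IsQuasiEigenfunction

variable {Y Z : Type*} [MeasurableSpace Y] [MeasurableSpace Z] {S : Y → Y} {ν : Measure Y}
  {R : Z → Z} {κ : Measure Z} {π : Y → Z} {j : ℕ} {c d : ℂ} {h g : Y → ℂ}

theorem congr (hS : MeasurePreserving S ν ν) (hh : IsQuasiEigenfunction S ν j c h)
    (hg : h =ᵐ[ν] g) : IsQuasiEigenfunction S ν j c g := by
  induction j generalizing h g with
  | zero =>
    change ∀ᵐ y ∂ν, h y = c at hh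
    change ∀ᵐ y ∂ν, g y = c
    filter_upwards [hh, hg] with y h1 h2
    rw [← h2, h1]
  | succ j ih =>
    refine ih (h := fun y => h (S y) * (starRingEnd ℂ) (h y)) hh ?_
    filter_upwards [hg, hS.quasiMeasurePreserving.ae hg] with y h1 h2
    rw [h1, h2]

theorem mul (hh : IsQuasiEigenfunction S ν j c h) (hg : IsQuasiEigenfunction S ν j d g) :
    IsQuasiEigenfunction S ν j (c * d) (fun y => h y * g y) := by
  induction j generalizing h g with
  | zero =>
    change ∀ᵐ y ∂ν, h y = c at hh
    change ∀ᵐ y ∂ν, g y = d at hg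
    change ∀ᵐ y ∂ν, h y * g y = c * d
    filter_upwards [hh, hg] with y h1 h2
    rw [h1, h2]
  | succ j ih =>
    have := ih (h := fun y => h (S y) * (starRingEnd ℂ) (h y))
      (g := fun y => g (S y) * (starRingEnd ℂ) (g y)) hh hg
    change IsQuasiEigenfunction S ν j (c * d)
      (fun y => h (S y) * g (S y) * (starRingEnd ℂ) (h y * g y))
    convert this using 2 with y
    rw [map_mul]
    ring

theorem star (hh : IsQuasiEigenfunction S ν j c h) :
    IsQuasiEigenfunction S ν j ((starRingEnd ℂ) c) (fun y => (starRingEnd ℂ) (h y)) := by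
  induction j generalizing h with
  | zero =>
    change ∀ᵐ y ∂ν, h y = c at hh
    change ∀ᵐ y ∂ν, (starRingEnd ℂ) (h y) = (starRingEnd ℂ) c
    filter_upwards [hh] with y h1
    rw [h1]
  | succ j ih =>
    have := ih (h := fun y => h (S y) * (starRingEnd ℂ) (h y)) hh
    simp only [map_mul] at this
    exact this

theorem one : IsQuasiEigenfunction S ν j 1 (fun _ => 1) := by
  induction j with
  | zero => exact Eventually.of_forall fun _ => rfl
  | succ j ih =>
    change IsQuasiEigenfunction S ν j 1 (fun _ => 1 * (starRingEnd ℂ) 1)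
    simpa using ih

/-- Quasi-eigenfunctions of a factor lift to quasi-eigenfunctions of the extension. -/
theorem comp_factor {u : Z → ℂ} (hπ : MeasurePreserving π ν κ) (hc : ∀ y, π (S y) = R (π y))
    (hu : IsQuasiEigenfunction R κ j c u) : IsQuasiEigenfunction S ν j c (fun y => u (π y)) := by
  induction j generalizing u with
  | zero => exact hπ.quasiMeasurePreserving.ae hu
  | succ j ih =>
    have := ih (u := fun z => u (R z) * (starRingEnd ℂ) (u z)) hu
    change IsQuasiEigenfunction S ν j c (fun y => u (π (S y)) * (starRingEnd ℂ) (u (π y)))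
    simpa only [hc] using this

theorem iterate_diff (hS : MeasurePreserving S ν ν) (hmod : ∀ᵐ y ∂ν, ‖h y‖ = 1)
    (hh : IsQuasiEigenfunction S ν (j + 1) c h) (n : ℕ) :
    IsQuasiEigenfunction S ν j (c ^ n) (fun y => h (S^[n] y) * (starRingEnd ℂ) (h y)) := by
  induction n with
  | zero =>
    rw [pow_zero]
    refine one.congr hS ?_
    filter_upwards [hmod] with y hy
    simp [Complex.mul_conj', hy]
  | succ n ih =>
    rw [pow_succ]
    refine ((ih.comp_factor (π := S) hS fun _ => rfl).mul hh).congr hS ?_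
    filter_upwards [hS.quasiMeasurePreserving.ae hmod] with y hy
    have h1 : (starRingEnd ℂ) (h (S y)) * h (S y) = 1 := by simp [Complex.conj_mul', hy]
    rw [Function.iterate_succ_apply]
    linear_combination (h (S^[n] (S y)) * (starRingEnd ℂ) (h y)) * h1

theorem iterate (hS : MeasurePreserving S ν ν) (hmod : ∀ᵐ y ∂ν, ‖h y‖ = 1)
    (hh : IsQuasiEigenfunction S ν j c h) (n : ℕ) :
    IsQuasiEigenfunction (S^[n]) ν j (c ^ n ^ j) h := by
  induction j generalizing h c with
  | zero =>
    rw [pow_zero, pow_one]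
    exact hh
  | succ j ih =>
    rw [pow_succ', pow_mul]
    refine ih ?_ (hh.iterate_diff hS hmod n)
    filter_upwards [hmod, (hS.iterate n).quasiMeasurePreserving.ae hmod] with y h1 h2
    simp [h1, h2]

/-- A vector of `L²` with orthogonal translates under a measure preserving map has mean zero. -/
theorem integral_eq_zero_of_orthogonal [IsProbabilityMeasure ν] (hS : MeasurePreserving S ν ν)
    (hm : AEStronglyMeasurable h ν) (hmod : ∀ᵐ y ∂ν, ‖h y‖ = 1)
    (horth : ∀ n, 0 < n → ∫ y, h (S^[n] y) * (starRingEnd ℂ) (h y) ∂ν = 0) :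
    ∫ y, h y ∂ν = 0 := by
  have hmn (n : ℕ) : AEStronglyMeasurable (fun y => h (S^[n] y)) ν :=
    hm.comp_measurePreserving (hS.iterate n)
  have hmodn (n : ℕ) : ∀ᵐ y ∂ν, ‖h (S^[n] y)‖ = 1 :=
    (hS.iterate n).quasiMeasurePreserving.ae hmod
  have hLp (n : ℕ) : MemLp (fun y => h (S^[n] y)) 2 ν :=
    MemLp.of_bound (hmn n) 1 ((hmodn n).mono fun _ h => h.le)
  have hcomp (n : ℕ) {u : Y → ℂ} (hu : AEStronglyMeasurable u ν) :
      ∫ y, u (S^[n] y) ∂ν = ∫ y, u y ∂ν := by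
    have hp := hS.iterate n
    conv_rhs => rw [← hp.map_eq]
    rw [integral_map hp.aemeasurable (hp.map_eq.symm ▸ hu)]
  let v : ℕ → Lp ℂ 2 ν := fun n => (hLp n).toLp _
  have hinner (m n : ℕ) :
      inner ℂ (v m) (v n) = ∫ y, h (S^[n] y) * (starRingEnd ℂ) (h (S^[m] y)) ∂ν := by
    rw [L2.inner_def]
    refine integral_congr_ae ?_
    filter_upwards [(hLp m).coeFn_toLp, (hLp n).coeFn_toLp] with y h1 h2
    simp only [v, h1, h2, RCLike.inner_apply]
  have hlt (m n : ℕ) (hmn' : m < n) : inner ℂ (v m) (v n) = 0 := by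
    obtain ⟨p, rfl⟩ := Nat.exists_eq_add_of_lt hmn'
    rw [hinner, ← horth (p + 1) p.succ_pos,
      ← hcomp m (u := fun y => h (S^[p + 1] y) * (starRingEnd ℂ) (h y))
        ((hmn (p + 1)).mul (Complex.continuous_conj.comp_aestronglyMeasurable hm))]
    congr 1 with y
    rw [← Function.iterate_add_apply, show p + 1 + m = m + p + 1 by omega]
  have hon : Orthonormal ℂ v := by
    rw [orthonormal_iff_ite]
    intro m n
    split_ifs with hmn'
    · subst hmn'
      rw [hinner]
      have : ∀ᵐ y ∂ν, h (S^[m] y) * (starRingEnd ℂ) (h (S^[m] y)) = 1 := by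
        filter_upwards [hmodn m] with y hy
        simp [Complex.mul_conj', hy]
      rw [integral_congr_ae this]
      simp
    · rcases lt_or_gt_of_ne hmn' with hl | hl
      · exact hlt m n hl
      · rw [← inner_conj_symm, hlt n m hl, map_zero]
  let e : Lp ℂ 2 ν := (memLp_const (1 : ℂ)).toLp _
  have he (n : ℕ) : inner ℂ e (v n) = ∫ y, h y ∂ν := by
    rw [← hcomp n hm, L2.inner_def]
    refine integral_congr_ae ?_
    filter_upwards [(memLp_const (μ := ν) (p := 2) (1 : ℂ)).coeFn_toLp,
      (hLp n).coeFn_toLp] with y h1 h2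
    simp only [v, e, h1, h2, RCLike.inner_apply, map_one, mul_one]
  have hsum := hon.inner_products_summable (x := e)
  simp only [fun n => norm_inner_symm (𝕜 := ℂ) (v n) e, he] at hsum
  simpa using summable_const_iff _ |>.mp hsum

/-- A unimodular quasi-eigenfunction of positive order with irrational constant has mean zero. -/
theorem integral_eq_zero [IsProbabilityMeasure ν] (hS : MeasurePreserving S ν ν)
    (hm : AEStronglyMeasurable h ν) (hmod : ∀ᵐ y ∂ν, ‖h y‖ = 1)
    (hc : ∀ n : ℕ, n ≠ 0 → c ^ n ≠ 1) (hh : IsQuasiEigenfunction S ν (j + 1) c h) :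
    ∫ y, h y ∂ν = 0 := by
  induction j generalizing h c with
  | zero =>
    change ∀ᵐ y ∂ν, h (S y) * (starRingEnd ℂ) (h y) = c at hh
    have h1 : ∫ y, h (S y) ∂ν = ∫ y, h y ∂ν := by
      conv_rhs => rw [← hS.map_eq]
      rw [integral_map hS.aemeasurable (hS.map_eq.symm ▸ hm)]
    have h2 : ∫ y, h (S y) ∂ν = c * ∫ y, h y ∂ν := by
      rw [← integral_const_mul]
      refine integral_congr_ae ?_
      filter_upwards [hh, hmod] with y h1 h2
      have h3 : (starRingEnd ℂ) (h y) * h y = 1 := by simp [Complex.conj_mul', h2]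
      linear_combination h y * h1 - h (S y) * h3
    have h3 : (c - 1) * ∫ y, h y ∂ν = 0 := by linear_combination h1 - h2
    have h4 : c ≠ 1 := by simpa using hc 1 one_ne_zero
    exact (mul_eq_zero.mp h3).resolve_left (sub_ne_zero.mpr h4)
  | succ j ih =>
    refine integral_eq_zero_of_orthogonal hS hm hmod fun n hn => ?_
    refine ih ?_ ?_ (fun m hm0 => ?_) (hh.iterate_diff hS hmod n)
    · exact (hm.comp_measurePreserving (hS.iterate n)).mul
        (Complex.continuous_conj.comp_aestronglyMeasurable hm)
    · filter_upwards [hmod, (hS.iterate n).quasiMeasurePreserving.ae hmod] with y h1 h2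
      simp [h1, h2]
    · rw [← pow_mul]
      exact hc _ (mul_ne_zero hn.ne' hm0)

theorem of_chain {k : ℕ} {H : ℕ → Y → ℂ} (hS : MeasurePreserving S ν ν)
    (hmod : ∀ j ≤ k, ∀ᵐ y ∂ν, ‖H j y‖ = 1) (h0 : ∀ y, H 0 y = c)
    (hchain : ∀ j, 1 ≤ j → j ≤ k → ∀ᵐ y ∂ν, H j (S y) = H (j - 1) y * H j y) :
    ∀ j ≤ k, IsQuasiEigenfunction S ν j c (H j) := by
  intro j hj
  induction j with
  | zero => exact Eventually.of_forall h0
  | succ j ih =>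
    refine congr (j := j) hS (ih (by omega)) ?_
    filter_upwards [hchain (j + 1) (by omega) hj, hmod (j + 1) hj] with y h1 h2
    simp [h1, mul_assoc, Complex.mul_conj', h2]

/-- If quasi-eigenfunctions `f`, `g` of `T` correlate in a joining of `T^r` and `T^s`, then the
constants `c ^ r ^ (j + 1)` and `d ^ s ^ (j + 1)` agree up to a root of unity. -/
theorem exists_pow_eq_of_joining {f g : Y → ℂ} [IsProbabilityMeasure ν]
    (hS : MeasurePreserving S ν ν)
    (hfm : Measurable f) (hfmod : ∀ᵐ y ∂ν, ‖f y‖ = 1) (hf : IsQuasiEigenfunction S ν (j + 1) c f)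
    (hgm : Measurable g) (hgmod : ∀ᵐ y ∂ν, ‖g y‖ = 1) (hg : IsQuasiEigenfunction S ν (j + 1) d g)
    (hd : ‖d‖ = 1) {r s : ℕ} {ρ : Measure (Y × Y)} [IsProbabilityMeasure ρ]
    (hfst : ρ.map Prod.fst = ν) (hsnd : ρ.map Prod.snd = ν)
    (hρ : MeasurePreserving (Prod.map (S^[r]) (S^[s])) ρ ρ)
    (hne : ∫ p, f p.1 * (starRingEnd ℂ) (g p.2) ∂ρ ≠ 0) :
    ∃ n : ℕ, n ≠ 0 ∧ (c ^ r ^ (j + 1)) ^ n = (d ^ s ^ (j + 1)) ^ n := by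
  have h1 : MeasurePreserving Prod.fst ρ ν := ⟨measurable_fst, hfst⟩
  have h2 : MeasurePreserving Prod.snd ρ ν := ⟨measurable_snd, hsnd⟩
  have hf' := (hf.iterate hS hfmod r).comp_factor (S := Prod.map (S^[r]) (S^[s])) h1 fun _ => rfl
  have hg' := (hg.iterate hS hgmod s).comp_factor (S := Prod.map (S^[r]) (S^[s])) h2 fun _ => rfl
  have hfg := hf'.mul hg'.star
  by_contra! hcon
  refine hne (hfg.integral_eq_zero hρ ?_ ?_ fun n hn hpow => hcon n hn ?_)
  · exact ((hfm.comp measurable_fst).mul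
      (Complex.continuous_conj.measurable.comp (hgm.comp measurable_snd))).aestronglyMeasurable
  · filter_upwards [h1.quasiMeasurePreserving.ae hfmod, h2.quasiMeasurePreserving.ae hgmod]
      with p hp hq
    simp [hp, hq]
  · have hu : ((starRingEnd ℂ) (d ^ s ^ (j + 1))) ^ n * (d ^ s ^ (j + 1)) ^ n = 1 := by
      rw [← mul_pow, Complex.conj_mul', norm_pow, hd]
      simp
    rw [mul_pow] at hpow
    linear_combination (d ^ s ^ (j + 1)) ^ n * hpow - (c ^ r ^ (j + 1)) ^ n * hu

end IsQuasiEigenfunction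

/-- Two reduced fractions with proportional numerators and denominators coincide. -/
theorem eq_and_eq_of_coprime_of_mul_eq_mul {r s r' s' : ℕ} (hr : 0 < r)
    (hr' : 0 < r') (hco : Nat.Coprime r s) (hco' : Nat.Coprime r' s')
    (h : r * s' = r' * s) : r = r' ∧ s = s' := by
  have h1 : r ∣ r' := hco.dvd_of_dvd_mul_right (Dvd.intro _ h)
  have h2 : r' ∣ r := hco'.dvd_of_dvd_mul_right (Dvd.intro _ h.symm)
  obtain rfl := Nat.dvd_antisymm h1 h2
  exact ⟨rfl, (Nat.eq_of_mul_eq_mul_left hr h).symm⟩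

/-- **Proposition 3.4.** Let `T` be a totally ergodic automorphism of a standard Borel
probability space, `k ≥ 1`, `f ∈ E_k(T) \ E_{k-1}(T)` (witnessed by a chain `f₀, …, f_k`
with `f₀` an irrational constant `c`) and `g ∈ E_k(T)` (witnessed by a chain `g₀, …, g_k`
with `g₀` a constant of modulus 1). Then there is at most one pair `(r,s)` of coprime
positive integers admitting an ergodic joining `ρ` of `T^r` and `T^s` with
`∫ f(x) conj(g(y)) dρ ≠ 0`. -/
theorem at_most_one_pair_with_nonorthogonal_joining
    {X : Type*} [MeasurableSpace X] [StandardBorelSpace X]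
    (μ : Measure X) [IsProbabilityMeasure μ] (T : X ≃ᵐ X)
    (hT : MeasurePreserving T μ μ)
    (hTerg : TotallyErgodic (⇑T) μ)
    (k : ℕ) (hk : 1 ≤ k)
    (f : X → ℂ) (F : ℕ → X → ℂ)
    (hFmeas : ∀ j ≤ k, Measurable (F j))
    (hFmod : ∀ j ≤ k, ∀ᵐ x ∂μ, ‖F j x‖ = 1)
    (hFk : F k = f)
    (c : ℂ) (hc : ‖c‖ = 1) (hcirr : ∀ n : ℤ, n ≠ 0 → c ^ n ≠ 1)
    (hF0 : ∀ x, F 0 x = c)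
    (hFchain : ∀ j, 1 ≤ j → j ≤ k → ∀ᵐ x ∂μ, F j (T x) = F (j - 1) x * F j x)
    (g : X → ℂ) (G : ℕ → X → ℂ)
    (hGmeas : ∀ j ≤ k, Measurable (G j))
    (hGmod : ∀ j ≤ k, ∀ᵐ x ∂μ, ‖G j x‖ = 1)
    (hGk : G k = g)
    (c' : ℂ) (hc' : ‖c'‖ = 1)
    (hG0 : ∀ x, G 0 x = c')
    (hGchain : ∀ j, 1 ≤ j → j ≤ k → ∀ᵐ x ∂μ, G j (T x) = G (j - 1) x * G j x)
    (r s r' s' : ℕ) (hr : 0 < r) (hs : 0 < s) (hr' : 0 < r') (hs' : 0 < s')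
    (hco : Nat.Coprime r s) (hco' : Nat.Coprime r' s')
    (hρ : ∃ ρ : Measure (X × X), IsProbabilityMeasure ρ ∧
      ρ.map Prod.fst = μ ∧ ρ.map Prod.snd = μ ∧
      Ergodic (Prod.map ((⇑T)^[r]) ((⇑T)^[s])) ρ ∧
      (∫ p, f p.1 * (starRingEnd ℂ) (g p.2) ∂ρ) ≠ 0)
    (hρ' : ∃ ρ : Measure (X × X), IsProbabilityMeasure ρ ∧
      ρ.map Prod.fst = μ ∧ ρ.map Prod.snd = μ ∧
      Ergodic (Prod.map ((⇑T)^[r']) ((⇑T)^[s'])) ρ ∧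
      (∫ p, f p.1 * (starRingEnd ℂ) (g p.2) ∂ρ) ≠ 0) :
    r = r' ∧ s = s' := by
  obtain ⟨j, rfl⟩ : ∃ j, k = j + 1 := ⟨k - 1, by omega⟩
  subst hFk hGk
  have hf := IsQuasiEigenfunction.of_chain hT hFmod hF0 hFchain (j + 1) le_rfl
  have hg := IsQuasiEigenfunction.of_chain hT hGmod hG0 hGchain (j + 1) le_rfl
  have key (a b : ℕ) (hab : ∃ ρ : Measure (X × X), IsProbabilityMeasure ρ ∧
      ρ.map Prod.fst = μ ∧ ρ.map Prod.snd = μ ∧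
      Ergodic (Prod.map ((⇑T)^[a]) ((⇑T)^[b])) ρ ∧
      (∫ p, F (j + 1) p.1 * (starRingEnd ℂ) (G (j + 1) p.2) ∂ρ) ≠ 0) :
      ∃ n : ℕ, n ≠ 0 ∧ (c ^ a ^ (j + 1)) ^ n = (c' ^ b ^ (j + 1)) ^ n := by
    obtain ⟨ρ, _, h1, h2, h3, h4⟩ := hab
    exact IsQuasiEigenfunction.exists_pow_eq_of_joining hT (hFmeas _ le_rfl) (hFmod _ le_rfl) hf
      (hGmeas _ le_rfl) (hGmod _ le_rfl) hg hc' h1 h2 h3.toMeasurePreserving h4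
  obtain ⟨n, hn, h1⟩ := key r s hρ
  obtain ⟨m, hm, h2⟩ := key r' s' hρ'
  have hpow : c ^ (r ^ (j + 1) * n * (s' ^ (j + 1) * m)) =
      c ^ (r' ^ (j + 1) * m * (s ^ (j + 1) * n)) := by
    rw [pow_mul c (r ^ (j + 1) * n), pow_mul c (r ^ (j + 1)), h1,
      pow_mul c (r' ^ (j + 1) * m), pow_mul c (r' ^ (j + 1)), h2]
    simp only [← pow_mul]
    ring_nf
  have hc0 : c ≠ 0 := norm_ne_zero_iff.mp (by rw [hc]; exact one_ne_zero)
  have hexp : r ^ (j + 1) * n * (s' ^ (j + 1) * m) = r' ^ (j + 1) * m * (s ^ (j + 1) * n) := by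
    by_contra hne
    refine hcirr (((r ^ (j + 1) * n * (s' ^ (j + 1) * m) : ℕ) : ℤ) -
      ((r' ^ (j + 1) * m * (s ^ (j + 1) * n) : ℕ) : ℤ)) (sub_ne_zero.mpr (mod_cast hne)) ?_
    rw [zpow_sub₀ hc0, zpow_natCast, zpow_natCast, hpow]
    exact div_self (pow_ne_zero _ hc0)
  have hrs : (r * s') ^ (j + 1) = (r' * s) ^ (j + 1) := by
    refine Nat.eq_of_mul_eq_mul_right (Nat.pos_of_ne_zero (mul_ne_zero hn hm)) ?_
    rw [mul_pow, mul_pow]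
    linarith
  exact eq_and_eq_of_coprime_of_mul_eq_mul hr hr' hco hco'
    (Nat.pow_left_injective (Nat.succ_ne_zero j) hrs)
end

section
/- Let T be an automorphism of a standard Borel probability space (X,μ) with quasi-discrete spectrum. Then T has the AOP property. -/
open MeasureTheory Filter

/-- `c` is an eigenvalue of `T` w.r.t. `μ`. -/
def IsEigenvalue {X : Type*} [MeasurableSpace X] (T : X → X) (μ : Measure X) (c : ℂ) : Prop :=
  ∃ f : X → ℂ, MemLp f 2 μ ∧ ¬ (f =ᵐ[μ] 0) ∧
    (fun x => f (T x)) =ᵐ[μ] (fun x => c * f x)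

/-- The quasi-eigenfunction groups `E_k(T)`. -/
def quasiEigenfunctions {X : Type*} [MeasurableSpace X] (T : X → X) (μ : Measure X) :
    ℕ → Set (X → ℂ)
  | 0 => {f | ∃ c : ℂ, ‖c‖ = 1 ∧ IsEigenvalue T μ c ∧ f = fun _ => c}
  | (k+1) => {f | Measurable f ∧ (∀ᵐ x ∂μ, ‖f x‖ = 1) ∧
      (fun x => f (T x) / f x) ∈ quasiEigenfunctions T μ k}

/-- `(X,μ,T)` has quasi-discrete spectrum. -/
def QuasiDiscreteSpectrum {X : Type*} [MeasurableSpace X] (T : X → X) (μ : Measure X) : Prop :=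
  TotallyErgodic T μ ∧
  Dense ((Submodule.span ℂ
      {g : Lp ℂ 2 μ | ∃ k : ℕ, ∃ f ∈ quasiEigenfunctions T μ k, ⇑g =ᵐ[μ] f} :
        Submodule ℂ (Lp ℂ 2 μ)) : Set (Lp ℂ 2 μ))

/-- `(X,μ,T)` has asymptotically orthogonal powers (AOP). -/
def AOP {X : Type*} [MeasurableSpace X] (T : X → X) (μ : Measure X) : Prop :=
  ∀ f g : X → ℂ, MemLp f 2 μ → MemLp g 2 μ →
    (∫ x, f x ∂μ) = 0 → (∫ x, g x ∂μ) = 0 →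
    ∀ ε > (0:ℝ), ∃ N : ℕ, ∀ r s : ℕ, r.Prime → s.Prime → r ≠ s → N ≤ r → N ≤ s →
      ∀ κ : Measure (X × X), IsProbabilityMeasure κ →
        κ.map Prod.fst = μ → κ.map Prod.snd = μ →
        Ergodic (Prod.map (T^[r]) (T^[s])) κ →
        ‖∫ p, f p.1 * (starRingEnd ℂ) (g p.2) ∂κ‖ ≤ ε

/-- `f` is a unimodular function on `(Y, ν)` whose `k`-th multiplicative difference along `S` is
almost everywhere the constant `θ`. -/
def IsQuasiEigen {Y : Type*} [MeasurableSpace Y] (S : Y → Y) (ν : Measure Y) :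
    ℕ → ℂ → (Y → ℂ) → Prop
  | 0, θ, f => ‖θ‖ = 1 ∧ f =ᵐ[ν] fun _ => θ
  | (k+1), θ, f => AEStronglyMeasurable f ν ∧ (∀ᵐ y ∂ν, ‖f y‖ = 1) ∧
      IsQuasiEigen S ν k θ (fun y => f (S y) / f y)

namespace IsQuasiEigen

variable {Y : Type*} [MeasurableSpace Y] {S : Y → Y} {ν : Measure Y} {k : ℕ} {θ θ' : ℂ}
  {f g : Y → ℂ}

theorem aestronglyMeasurable (hf : IsQuasiEigen S ν k θ f) : AEStronglyMeasurable f ν := by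
  cases k with
  | zero => exact aestronglyMeasurable_const.congr hf.2.symm
  | succ k => exact hf.1

theorem ae_norm_eq_one (hf : IsQuasiEigen S ν k θ f) : ∀ᵐ y ∂ν, ‖f y‖ = 1 := by
  cases k with
  | zero => filter_upwards [hf.2] with y hy; rw [hy, hf.1]
  | succ k => exact hf.2.1

theorem norm_eq_one (hf : IsQuasiEigen S ν k θ f) : ‖θ‖ = 1 := by
  induction k generalizing f with
  | zero => exact hf.1
  | succ k ih => exact ih hf.2.2

theorem memLp [IsProbabilityMeasure ν] (hf : IsQuasiEigen S ν k θ f) : MemLp f 2 ν :=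
  MemLp.of_bound hf.aestronglyMeasurable 1 (hf.ae_norm_eq_one.mono fun _ h => h.le)

theorem congr (hS : MeasurePreserving S ν ν) (hf : IsQuasiEigen S ν k θ f) (hfg : f =ᵐ[ν] g) :
    IsQuasiEigen S ν k θ g := by
  induction k generalizing f g with
  | zero => exact ⟨hf.1, hfg.symm.trans hf.2⟩
  | succ k ih =>
    refine ⟨hf.1.congr hfg, ?_, ih hf.2.2 ?_⟩
    · filter_upwards [hf.2.1, hfg] with y h1 h2
      rw [← h2, h1]
    · filter_upwards [hfg, hS.quasiMeasurePreserving.ae hfg] with y h1 h2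
      rw [h1, h2]

theorem one (k : ℕ) : IsQuasiEigen S ν k 1 (fun _ => (1 : ℂ)) := by
  induction k with
  | zero => exact ⟨by simp, .rfl⟩
  | succ k ih => exact ⟨aestronglyMeasurable_const, by simp, by simpa using ih⟩

theorem mul (hf : IsQuasiEigen S ν k θ f) (hg : IsQuasiEigen S ν k θ' g) :
    IsQuasiEigen S ν k (θ * θ') (fun y => f y * g y) := by
  induction k generalizing f g with
  | zero =>
    refine ⟨by rw [norm_mul, hf.1, hg.1, one_mul], ?_⟩
    filter_upwards [hf.2, hg.2] with y h1 h2
    rw [h1, h2]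
  | succ k ih =>
    refine ⟨hf.1.mul hg.1, ?_, ?_⟩
    · filter_upwards [hf.2.1, hg.2.1] with y h1 h2
      rw [norm_mul, h1, h2, one_mul]
    · simpa only [mul_div_mul_comm] using ih hf.2.2 hg.2.2

theorem conj (hf : IsQuasiEigen S ν k θ f) :
    IsQuasiEigen S ν k (starRingEnd ℂ θ) (fun y => starRingEnd ℂ (f y)) := by
  induction k generalizing f with
  | zero =>
    refine ⟨by rw [RCLike.norm_conj, hf.1], ?_⟩
    filter_upwards [hf.2] with y h1
    rw [h1]
  | succ k ih =>
    refine ⟨Complex.continuous_conj.comp_aestronglyMeasurable hf.1, ?_, ?_⟩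
    · filter_upwards [hf.2.1] with y h1
      rw [RCLike.norm_conj, h1]
    · simpa only [map_div₀] using ih hf.2.2

theorem prod {F : ℕ → Y → ℂ}
    (hF : ∀ i, IsQuasiEigen S ν k θ (F i)) (n : ℕ) :
    IsQuasiEigen S ν k (θ ^ n) (fun y => ∏ i ∈ Finset.range n, F i y) := by
  induction n with
  | zero => simpa using one (S := S) (ν := ν) k
  | succ n ih =>
    simp only [Finset.prod_range_succ, pow_succ]
    exact ih.mul (hF n)

theorem succ_one (hS : MeasurePreserving S ν ν) (hf : IsQuasiEigen S ν k θ f) :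
    IsQuasiEigen S ν (k + 1) 1 f := by
  induction k generalizing f with
  | zero =>
    refine ⟨hf.aestronglyMeasurable, hf.ae_norm_eq_one, by simp, ?_⟩
    filter_upwards [hf.2, hS.quasiMeasurePreserving.ae hf.2] with y h1 h2
    have : θ ≠ 0 := norm_ne_zero_iff.1 (by rw [hf.1]; exact one_ne_zero)
    rw [h1, h2, div_self this]
  | succ k ih => exact ⟨hf.1, hf.2.1, ih hf.2.2⟩

theorem of_lt (hS : MeasurePreserving S ν ν) {l : ℕ} (hkl : k < l)
    (hf : IsQuasiEigen S ν k θ f) : IsQuasiEigen S ν l 1 f := by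
  induction l, hkl using Nat.le_induction with
  | base => exact hf.succ_one hS
  | succ l _ ih => exact ih.succ_one hS

theorem comp {Z : Type*} [MeasurableSpace Z] {R : Z → Z} {η : Measure Z} {π : Z → Y}
    (hπ : MeasurePreserving π η ν) (hc : ∀ z, π (R z) = S (π z))
    (hf : IsQuasiEigen S ν k θ f) : IsQuasiEigen R η k θ (fun z => f (π z)) := by
  induction k generalizing f with
  | zero => exact ⟨hf.1, hπ.quasiMeasurePreserving.ae hf.2⟩
  | succ k ih =>
    refine ⟨hf.1.comp_measurePreserving hπ, hπ.quasiMeasurePreserving.ae hf.2.1, ?_⟩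
    simpa only [hc] using ih hf.2.2

/-- The multiplicative difference along an iterate telescopes. -/
theorem ae_div_eq_prod (hS : MeasurePreserving S ν ν) (hf : ∀ᵐ y ∂ν, ‖f y‖ = 1) (n : ℕ) :
    (fun y => ∏ i ∈ Finset.range n, f (S (S^[i] y)) / f (S^[i] y)) =ᵐ[ν]
      fun y => f (S^[n] y) / f y := by
  have h : ∀ᵐ y ∂ν, ∀ i : ℕ, f (S^[i] y) ≠ 0 := by
    rw [ae_all_iff]
    intro i
    filter_upwards [(hS.iterate i).quasiMeasurePreserving.ae hf] with y hy h0
    simp [h0] at hy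
  filter_upwards [h] with y hy
  induction n with
  | zero => exact (div_self (hy 0)).symm
  | succ n ih =>
    have := hy n
    rw [Finset.prod_range_succ, ih, Function.iterate_succ_apply']
    field_simp

theorem div_iterate (hS : MeasurePreserving S ν ν) (hf : IsQuasiEigen S ν (k + 1) θ f) (n : ℕ) :
    IsQuasiEigen S ν k (θ ^ n) (fun y => f (S^[n] y) / f y) := by
  refine (prod (fun i => ?_) n).congr hS (ae_div_eq_prod hS hf.2.1 n)
  exact hf.2.2.comp (hS.iterate i) fun z => Function.Commute.self_iterate S i z |>.symm

theorem iterate (hS : MeasurePreserving S ν ν) (hf : IsQuasiEigen S ν k θ f) (n : ℕ) :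
    IsQuasiEigen (S^[n]) ν k (θ ^ n ^ k) f := by
  induction k generalizing f θ with
  | zero => exact ⟨by simpa using hf.1, by simpa using hf.2⟩
  | succ k ih =>
    refine ⟨hf.1, hf.2.1, ?_⟩
    rw [pow_succ', pow_mul]
    exact ih (hf.div_iterate hS n)

end IsQuasiEigen

section

variable {Y : Type*} [MeasurableSpace Y] {S : Y → Y} {ν : Measure Y}
  {k : ℕ} {θ : ℂ} {f : Y → ℂ}

theorem inner_toLp_eq_integral {u v : Y → ℂ} (hu : MemLp u 2 ν) (hv : MemLp v 2 ν) :
    inner ℂ (hu.toLp u) (hv.toLp v) = ∫ y, v y * starRingEnd ℂ (u y) ∂ν := by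
  rw [L2.inner_def]
  refine integral_congr_ae ?_
  filter_upwards [hu.coeFn_toLp, hv.coeFn_toLp] with y h1 h2
  rw [h1, h2, RCLike.inner_apply]

theorem integral_comp_of_measurePreserving {Z : Type*} [MeasurableSpace Z] {η : Measure Z}
    {π : Z → Y} (hπ : MeasurePreserving π η ν) (hf : AEStronglyMeasurable f ν) :
    ∫ z, f (π z) ∂η = ∫ y, f y ∂ν := by
  have h := hπ.map_eq
  rw [← h] at hf
  rw [← integral_map hπ.aemeasurable hf, h]

/-- A unimodular function orthogonal to all its translates has mean zero. -/
theorem integral_eq_zero_of_div_iterate [IsProbabilityMeasure ν] (hS : MeasurePreserving S ν ν)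
    (hm : AEStronglyMeasurable f ν) (hf : ∀ᵐ y ∂ν, ‖f y‖ = 1)
    (h0 : ∀ n : ℕ, n ≠ 0 → ∫ y, f (S^[n] y) / f y ∂ν = 0) : ∫ y, f y ∂ν = 0 := by
  have hL : ∀ n : ℕ, MemLp (fun y => f (S^[n] y)) 2 ν := fun n =>
    MemLp.of_bound (hm.comp_measurePreserving (hS.iterate n)) 1
      (((hS.iterate n).quasiMeasurePreserving.ae hf).mono fun _ h => h.le)
  have hone : MemLp (fun _ : Y => (1 : ℂ)) 2 ν := memLp_const 1
  have hdiv : ∀ i n : ℕ, inner ℂ ((hL i).toLp _) ((hL (i + n)).toLp _) =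
      ∫ y, f (S^[n] y) / f y ∂ν := by
    intro i n
    rw [inner_toLp_eq_integral]
    refine Eq.trans ?_ (integral_comp_of_measurePreserving (hS.iterate i)
      ((hm.comp_measurePreserving (hS.iterate n)).div₀ hm))
    refine integral_congr_ae ?_
    filter_upwards [(hS.iterate i).quasiMeasurePreserving.ae hf] with y hy
    rw [add_comm i n, Function.iterate_add_apply, ← Complex.inv_eq_conj hy]
    rfl
  have hlt : ∀ i j : ℕ, i < j → inner ℂ ((hL i).toLp _) ((hL j).toLp _) = (0 : ℂ) := by
    intro i j hij
    obtain ⟨n, rfl⟩ := Nat.exists_eq_add_of_lt hij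
    rw [add_assoc, hdiv, h0 _ (Nat.succ_ne_zero n)]
  have hdiag : ∀ i : ℕ, inner ℂ ((hL i).toLp _) ((hL i).toLp _) = (1 : ℂ) := by
    intro i
    have h1 : ∫ y, f (S^[0] y) / f y ∂ν = ∫ _, (1 : ℂ) ∂ν := by
      refine integral_congr_ae (hf.mono fun y hy => ?_)
      have : f y ≠ 0 := norm_ne_zero_iff.1 (by rw [hy]; exact one_ne_zero)
      exact div_self this
    have h2 := hdiv i 0
    rw [h1] at h2
    simpa using h2
  have hortho : Orthonormal ℂ (fun n => (hL n).toLp _) := by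
    rw [orthonormal_iff_ite]
    intro i j
    rcases lt_trichotomy i j with h | rfl | h
    · rw [hlt i j h, if_neg h.ne]
    · rw [hdiag, if_pos rfl]
    · rw [← inner_conj_symm, hlt j i h, if_neg h.ne', map_zero]
  have hmean : ∀ n : ℕ, ‖(inner ℂ ((hL n).toLp _) (hone.toLp _) : ℂ)‖ = ‖∫ y, f y ∂ν‖ := by
    intro n
    rw [← norm_inner_symm, inner_toLp_eq_integral]
    simp only [map_one, mul_one]
    rw [integral_comp_of_measurePreserving (hS.iterate n) hm]
  by_contra hne
  have hpos : 0 < ‖∫ y, f y ∂ν‖ ^ 2 := by positivity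
  obtain ⟨N, hN⟩ := exists_nat_gt (‖hone.toLp (fun _ : Y => (1 : ℂ))‖ ^ 2 / ‖∫ y, f y ∂ν‖ ^ 2)
  have hB := hortho.sum_inner_products_le (hone.toLp _) (s := Finset.range N)
  simp only [hmean, Finset.sum_const, Finset.card_range, nsmul_eq_mul] at hB
  rw [div_lt_iff₀ hpos] at hN
  exact absurd hB (not_le.2 hN)

theorem IsQuasiEigen.integral_eq_zero [IsProbabilityMeasure ν]
    (hS : MeasurePreserving S ν ν) (hf : IsQuasiEigen S ν (k + 1) θ f)
    (hθ : ∀ n : ℕ, n ≠ 0 → θ ^ n ≠ 1) :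
    ∫ y, f y ∂ν = 0 := by
  induction k generalizing f θ with
  | zero =>
    have h : ∫ y, f y ∂ν = θ * ∫ y, f y ∂ν := by
      rw [← integral_const_mul]
      conv_lhs => rw [← integral_comp_of_measurePreserving hS hf.1]
      refine integral_congr_ae ?_
      filter_upwards [hf.2.2.2, hf.2.1] with y h1 h2
      have : f y ≠ 0 := norm_ne_zero_iff.1 (by rw [h2]; exact one_ne_zero)
      rw [← h1, div_mul_cancel₀ _ this]
    have h1 : θ - 1 ≠ 0 := sub_ne_zero.2 (by simpa using hθ 1 one_ne_zero)
    refine (mul_eq_zero.1 ?_).resolve_left h1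
    linear_combination -h
  | succ k ih =>
    refine integral_eq_zero_of_div_iterate hS hf.1 hf.2.1 fun n hn => ?_
    refine ih (hf.div_iterate hS n) fun m hm => ?_
    rw [← pow_mul]
    exact hθ _ (mul_ne_zero hn hm)

end

section TotallyErgodic

variable {X : Type*} [MeasurableSpace X] {T : X → X} {μ : Measure X}

theorem TotallyErgodic.measurePreserving (hT : TotallyErgodic T μ) : MeasurePreserving T μ μ := by
  simpa using (hT 1 one_ne_zero).toMeasurePreserving

theorem exists_isQuasiEigen_of_mem {k : ℕ} {f : X → ℂ} (hf : f ∈ quasiEigenfunctions T μ k) :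
    ∃ θ, IsQuasiEigen T μ k θ f := by
  induction k generalizing f with
  | zero =>
    obtain ⟨c, hc, -, rfl⟩ := hf
    exact ⟨c, hc, .rfl⟩
  | succ k ih =>
    obtain ⟨θ, hθ⟩ := ih hf.2.2
    exact ⟨θ, hf.1.aestronglyMeasurable, hf.2.1, hθ⟩

/-- Under total ergodicity a quasi-eigenfunction is constant or has, at its exact order, a last
difference that is not a root of unity. -/
theorem IsQuasiEigen.const_or_exists [IsProbabilityMeasure μ] (hT : TotallyErgodic T μ) {k : ℕ}
    {θ : ℂ} {f : X → ℂ} (hf : IsQuasiEigen T μ k θ f) :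
    (∃ c, f =ᵐ[μ] fun _ => c) ∨
      ∃ j θ', IsQuasiEigen T μ (j + 1) θ' f ∧ ∀ n : ℕ, n ≠ 0 → θ' ^ n ≠ 1 := by
  induction k generalizing f with
  | zero => exact .inl ⟨θ, hf.2⟩
  | succ k ih =>
    rcases ih hf.2.2 with ⟨c, hc⟩ | ⟨j, θ', hj, hθ'⟩
    · have hnorm : ‖c‖ = 1 := by
        obtain ⟨y, h1, h2⟩ := (hc.and hf.2.2.ae_norm_eq_one).exists
        exact (congrArg norm h1).symm.trans h2
      have h1 : IsQuasiEigen T μ 1 c f := ⟨hf.1, hf.2.1, hnorm, hc⟩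
      by_cases hroot : ∃ n : ℕ, n ≠ 0 ∧ c ^ n = 1
      · obtain ⟨n, hn, hcn⟩ := hroot
        refine .inl ((hT n hn).ae_eq_const_of_ae_eq_comp_ae hf.1 ?_)
        filter_upwards [(h1.div_iterate hT.measurePreserving n).2, hf.2.1] with y h2 h3
        have : f y ≠ 0 := norm_ne_zero_iff.1 (by rw [h3]; exact one_ne_zero)
        rwa [hcn, div_eq_one_iff_eq this] at h2
      · push Not at hroot
        exact .inr ⟨0, c, h1, hroot⟩
    · exact .inr ⟨j + 1, θ', ⟨hf.1, hf.2.1, hj⟩, hθ'⟩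

end TotallyErgodic

/-- Two numbers that are not roots of unity have at most one pair of distinct prime exponents for
which the `k`-th powers are related up to a root of unity. -/
theorem exists_forall_prime_pow_mul_ne_one {c d : ℂ} (hd1 : ‖d‖ = 1)
    (hc : ∀ n : ℕ, n ≠ 0 → c ^ n ≠ 1) {k : ℕ} (hk : k ≠ 0) :
    ∃ N : ℕ, ∀ r s : ℕ, r.Prime → s.Prime → r ≠ s → N ≤ r → ∀ n : ℕ, n ≠ 0 →
      (c ^ r ^ k * starRingEnd ℂ d ^ s ^ k) ^ n ≠ 1 := by
  have hrel : ∀ r s n : ℕ, (c ^ r ^ k * starRingEnd ℂ d ^ s ^ k) ^ n = 1 →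
      c ^ (r ^ k * n) = d ^ (s ^ k * n) := by
    intro r s n h
    rw [← Complex.inv_eq_conj hd1, mul_pow, ← pow_mul, ← pow_mul, inv_pow] at h
    exact eq_of_div_eq_one (by rwa [div_eq_mul_inv])
  by_cases hex : ∃ r s n : ℕ, r.Prime ∧ s.Prime ∧ r ≠ s ∧ n ≠ 0 ∧
      (c ^ r ^ k * starRingEnd ℂ d ^ s ^ k) ^ n = 1
  · obtain ⟨r₀, s₀, n₀, hr₀, hs₀, hne₀, hn₀, h₀⟩ := hex
    refine ⟨r₀ + 1, fun r s hr hs hne hN n hn h => ?_⟩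
    have e₀ := hrel _ _ _ h₀
    have e := hrel _ _ _ h
    have hpow : c ^ (r ^ k * s₀ ^ k * (n * n₀)) = c ^ (r₀ ^ k * s ^ k * (n * n₀)) := by
      calc c ^ (r ^ k * s₀ ^ k * (n * n₀)) = (c ^ (r ^ k * n)) ^ (s₀ ^ k * n₀) := by
            rw [← pow_mul]; ring_nf
        _ = (d ^ (s₀ ^ k * n₀)) ^ (s ^ k * n) := by rw [e, ← pow_mul, ← pow_mul]; ring_nf
        _ = c ^ (r₀ ^ k * s ^ k * (n * n₀)) := by rw [← e₀, ← pow_mul]; ring_nf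
    have hc0 : c ≠ 0 := by
      rintro rfl
      have h1 : r ^ k ≠ 0 := pow_ne_zero _ hr.ne_zero
      rw [zero_pow h1, zero_mul, zero_pow hn] at h
      exact zero_ne_one h
    have hinj : ∀ a b : ℕ, c ^ a = c ^ b → a ≤ b → a = b := by
      intro a b hab hle
      obtain ⟨m, rfl⟩ := Nat.exists_eq_add_of_le hle
      by_contra hm
      refine hc m (by omega) ?_
      rw [pow_add] at hab
      exact (mul_eq_left₀ (pow_ne_zero a hc0)).1 hab.symm
    have hexp : r ^ k * s₀ ^ k = r₀ ^ k * s ^ k := by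
      refine Nat.eq_of_mul_eq_mul_right (Nat.pos_of_ne_zero (mul_ne_zero hn hn₀)) ?_
      rcases le_total (r ^ k * s₀ ^ k * (n * n₀)) (r₀ ^ k * s ^ k * (n * n₀)) with hle | hle
      · exact hinj _ _ hpow hle
      · exact (hinj _ _ hpow.symm hle).symm
    rw [← mul_pow, ← mul_pow] at hexp
    have hmul := Nat.pow_left_injective hk hexp
    have hdvd : r ∣ r₀ * s := ⟨s₀, hmul.symm⟩
    rcases (Nat.Prime.dvd_mul hr).1 hdvd with h1 | h1
    · have := Nat.le_of_dvd hr₀.pos h1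
      omega
    · exact hne ((Nat.prime_dvd_prime_iff_eq hr hs).1 h1)
  · refine ⟨0, fun r s hr hs hne _ n hn h => hex ⟨r, s, n, hr, hs, hne, hn, h⟩⟩

/-- A joining of `T^[r]` and `T^[s]` for distinct primes `r` and `s`. -/
structure PrimePowerJoining {X : Type*} [MeasurableSpace X] (T : X → X) (μ : Measure X) where
  /-- the first exponent -/
  r : ℕ
  /-- the second exponent -/
  s : ℕ
  /-- the joining measure -/
  κ : Measure (X × X)
  prime_r : r.Prime
  prime_s : s.Prime
  ne : r ≠ s
  fst : MeasurePreserving Prod.fst κ μ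
  snd : MeasurePreserving Prod.snd κ μ
  invariant : MeasurePreserving (Prod.map (T^[r]) (T^[s])) κ κ

namespace PrimePowerJoining

variable {X : Type*} [MeasurableSpace X] {T : X → X} {μ : Measure X}

theorem isProbabilityMeasure [IsProbabilityMeasure μ] (J : PrimePowerJoining T μ) :
    IsProbabilityMeasure J.κ :=
  ⟨by simpa using J.fst.measure_preimage (s := Set.univ) MeasurableSet.univ.nullMeasurableSet⟩

/-- The filter of joinings with both exponents large. -/
def largeExponents (T : X → X) (μ : Measure X) : Filter (PrimePowerJoining T μ) :=
  comap (fun J => min J.r J.s) atTop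

theorem eventually_largeExponents {p : PrimePowerJoining T μ → Prop} :
    (∀ᶠ J in largeExponents T μ, p J) ↔ ∃ N : ℕ, ∀ J, N ≤ J.r → N ≤ J.s → p J := by
  simp only [largeExponents, eventually_comap, eventually_atTop]
  constructor
  · rintro ⟨N, h⟩
    exact ⟨N, fun J hr hs => h _ (le_min hr hs) J rfl⟩
  · rintro ⟨N, h⟩
    refine ⟨N, fun b hb J hJ => h J ?_ ?_⟩
    · exact hb.trans (hJ ▸ min_le_left _ _)
    · exact hb.trans (hJ ▸ min_le_right _ _)

/-- The correlation `∫ u ⊗ conj v dκ`. -/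
noncomputable def corr (J : PrimePowerJoining T μ) (u v : Lp ℂ 2 μ) : ℂ :=
  inner ℂ (Lp.compMeasurePreservingₗᵢ ℂ Prod.snd J.snd v)
    (Lp.compMeasurePreservingₗᵢ ℂ Prod.fst J.fst u)

theorem corr_eq_integral (J : PrimePowerJoining T μ) {u v : Lp ℂ 2 μ} {f g : X → ℂ}
    (hu : u =ᵐ[μ] f) (hv : v =ᵐ[μ] g) :
    J.corr u v = ∫ p, f p.1 * starRingEnd ℂ (g p.2) ∂J.κ := by
  rw [corr, L2.inner_def]
  refine integral_congr_ae ?_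
  filter_upwards [Lp.coeFn_compMeasurePreserving v J.snd, Lp.coeFn_compMeasurePreserving u J.fst,
    J.fst.quasiMeasurePreserving.ae hu, J.snd.quasiMeasurePreserving.ae hv] with p h1 h2 h3 h4
  rw [RCLike.inner_apply]
  change (Lp.compMeasurePreserving Prod.fst J.fst u : X × X → ℂ) p *
    starRingEnd ℂ ((Lp.compMeasurePreserving Prod.snd J.snd v : X × X → ℂ) p) = _
  rw [h1, h2, Function.comp_apply, Function.comp_apply, h3, h4]

variable [IsProbabilityMeasure μ]

/-- The covariance `∫ u ⊗ conj v dκ - ∫ u dμ * ∫ conj v dμ`. -/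
noncomputable def cov (J : PrimePowerJoining T μ) (u v : Lp ℂ 2 μ) : ℂ :=
  J.corr u v - inner ℂ v ((memLp_const (1 : ℂ)).toLp) * inner ℂ ((memLp_const (1 : ℂ)).toLp) u

theorem cov_eq_integral (J : PrimePowerJoining T μ) {u v : Lp ℂ 2 μ} {f g : X → ℂ}
    (hu : u =ᵐ[μ] f) (hv : v =ᵐ[μ] g) :
    J.cov u v = ∫ p, f p.1 * starRingEnd ℂ (g p.2) ∂J.κ -
      (∫ x, starRingEnd ℂ (g x) ∂μ) * ∫ x, f x ∂μ := by
  have hone := (memLp_const (μ := μ) (p := 2) (1 : ℂ)).coeFn_toLp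
  rw [cov, J.corr_eq_integral hu hv, L2.inner_def, L2.inner_def]
  congr 2
  · refine integral_congr_ae ?_
    filter_upwards [hv, hone] with x h1 h2
    rw [h1, h2, RCLike.inner_apply, one_mul]
  · refine integral_congr_ae ?_
    filter_upwards [hu, hone] with x h1 h2
    rw [h1, h2, RCLike.inner_apply, map_one, mul_one]

theorem cov_add_left (J : PrimePowerJoining T μ) (u u' v : Lp ℂ 2 μ) :
    J.cov (u + u') v = J.cov u v + J.cov u' v := by
  simp only [cov, corr, map_add, inner_add_right]
  ring

theorem cov_add_right (J : PrimePowerJoining T μ) (u v v' : Lp ℂ 2 μ) :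
    J.cov u (v + v') = J.cov u v + J.cov u v' := by
  simp only [cov, corr, map_add, inner_add_left]
  ring

theorem cov_smul_left (J : PrimePowerJoining T μ) (a : ℂ) (u v : Lp ℂ 2 μ) :
    J.cov (a • u) v = a * J.cov u v := by
  simp only [cov, corr, map_smul, inner_smul_right]
  ring

theorem cov_smul_right (J : PrimePowerJoining T μ) (a : ℂ) (u v : Lp ℂ 2 μ) :
    J.cov u (a • v) = starRingEnd ℂ a * J.cov u v := by
  simp only [cov, corr, map_smul, inner_smul_left]
  ring

theorem norm_cov_le (J : PrimePowerJoining T μ) (u v : Lp ℂ 2 μ) :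
    ‖J.cov u v‖ ≤ 2 * ‖u‖ * ‖v‖ := by
  have h1 : ‖J.corr u v‖ ≤ ‖v‖ * ‖u‖ := by
    simpa only [corr, LinearIsometry.norm_map] using norm_inner_le_norm (𝕜 := ℂ)
      (Lp.compMeasurePreservingₗᵢ ℂ Prod.snd J.snd v)
      (Lp.compMeasurePreservingₗᵢ ℂ Prod.fst J.fst u)
  have hone : ‖(memLp_const (1 : ℂ)).toLp (p := 2) (μ := μ)‖ ≤ 1 := by
    simpa using Lp.norm_const_le (p := 2) (μ := μ) (c := (1 : ℂ))
  have h2 : ‖(inner ℂ v ((memLp_const (1 : ℂ)).toLp) : ℂ)‖ ≤ ‖v‖ :=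
    (norm_inner_le_norm _ _).trans (mul_le_of_le_one_right (norm_nonneg _) hone)
  have h3 : ‖(inner ℂ ((memLp_const (1 : ℂ)).toLp) u : ℂ)‖ ≤ ‖u‖ :=
    (norm_inner_le_norm _ _).trans (mul_le_of_le_one_left (norm_nonneg _) hone)
  calc ‖J.cov u v‖ ≤ ‖v‖ * ‖u‖ + ‖v‖ * ‖u‖ := by
        refine (norm_sub_le _ _).trans (add_le_add h1 ?_)
        rw [norm_mul]
        exact mul_le_mul h2 h3 (norm_nonneg _) (norm_nonneg _)
    _ = 2 * ‖u‖ * ‖v‖ := by ring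

/-- Quasi-eigenfunctions whose last differences are not roots of unity are orthogonal under every
joining with large exponents. -/
theorem eventually_integral_eq_zero (hT : MeasurePreserving T μ μ) {k l : ℕ} {c d : ℂ}
    {f g : X → ℂ} (hf : IsQuasiEigen T μ (k + 1) c f) (hg : IsQuasiEigen T μ (l + 1) d g)
    (hc : ∀ n : ℕ, n ≠ 0 → c ^ n ≠ 1) (hd : ∀ n : ℕ, n ≠ 0 → d ^ n ≠ 1) :
    ∀ᶠ J in largeExponents T μ, ∫ p, f p.1 * starRingEnd ℂ (g p.2) ∂J.κ = 0 := by
  have hvanish : ∀ (m : ℕ) (a b : ℂ), IsQuasiEigen T μ (m + 1) a f →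
      IsQuasiEigen T μ (m + 1) b g → ∀ J : PrimePowerJoining T μ,
      (∀ n : ℕ, n ≠ 0 → (a ^ J.r ^ (m + 1) * starRingEnd ℂ b ^ J.s ^ (m + 1)) ^ n ≠ 1) →
      ∫ p, f p.1 * starRingEnd ℂ (g p.2) ∂J.κ = 0 := by
    intro m a b ha hb J hab
    have := J.isProbabilityMeasure
    have h1 := (ha.iterate hT J.r).comp (R := Prod.map (T^[J.r]) (T^[J.s])) J.fst fun _ => rfl
    have h2 := (hb.conj.iterate hT J.s).comp (R := Prod.map (T^[J.r]) (T^[J.s])) J.snd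
      fun _ => rfl
    exact (h1.mul h2).integral_eq_zero J.invariant hab
  rw [eventually_largeExponents]
  rcases lt_trichotomy k l with hkl | rfl | hkl
  · refine ⟨0, fun J _ _ => hvanish l 1 d (hf.of_lt hT (Nat.succ_lt_succ hkl)) hg J ?_⟩
    intro n hn h
    rw [one_pow, one_mul, ← map_pow, ← map_pow, ← pow_mul, map_eq_one_iff _ (RingHom.injective _)]
      at h
    exact hd _ (mul_ne_zero (pow_ne_zero _ J.prime_s.ne_zero) hn) h
  · obtain ⟨N, hN⟩ := exists_forall_prime_pow_mul_ne_one hg.norm_eq_one hc (Nat.succ_ne_zero k)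
    exact ⟨N, fun J hr _ => hvanish k c d hf hg J (hN _ _ J.prime_r J.prime_s J.ne hr)⟩
  · refine ⟨0, fun J _ _ => hvanish k c 1 hf (hg.of_lt hT (Nat.succ_lt_succ hkl)) J ?_⟩
    intro n hn h
    rw [map_one, one_pow, mul_one, ← pow_mul] at h
    exact hc _ (mul_ne_zero (pow_ne_zero _ J.prime_r.ne_zero) hn) h

theorem cov_eq_zero_of_left_const (J : PrimePowerJoining T μ) {u : Lp ℂ 2 μ} {c : ℂ}
    (hu : u =ᵐ[μ] fun _ => c) (v : Lp ℂ 2 μ) : J.cov u v = 0 := by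
  have h := integral_comp_of_measurePreserving J.snd
    (Complex.continuous_conj.comp_aestronglyMeasurable (Lp.aestronglyMeasurable v))
  rw [J.cov_eq_integral hu (ae_eq_refl v), integral_const_mul, h]
  simp [mul_comm]

theorem cov_eq_zero_of_right_const (J : PrimePowerJoining T μ) (u : Lp ℂ 2 μ) {v : Lp ℂ 2 μ} {c : ℂ}
    (hv : v =ᵐ[μ] fun _ => c) : J.cov u v = 0 := by
  have h := integral_comp_of_measurePreserving J.fst (Lp.aestronglyMeasurable u)
  rw [J.cov_eq_integral (ae_eq_refl u) hv, integral_mul_const, h]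
  simp [mul_comm]

theorem tendsto_cov_of_mem (hT : TotallyErgodic T μ) {u v : Lp ℂ 2 μ} {k l : ℕ} {f g : X → ℂ}
    (hf : f ∈ quasiEigenfunctions T μ k) (hg : g ∈ quasiEigenfunctions T μ l)
    (hu : u =ᵐ[μ] f) (hv : v =ᵐ[μ] g) :
    Tendsto (fun J : PrimePowerJoining T μ => J.cov u v) (largeExponents T μ) (nhds 0) := by
  obtain ⟨_, hf⟩ := exists_isQuasiEigen_of_mem hf
  obtain ⟨_, hg⟩ := exists_isQuasiEigen_of_mem hg
  refine tendsto_const_nhds.congr' (EventuallyEq.symm ?_)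
  rcases hf.const_or_exists hT with ⟨c, hc⟩ | ⟨i, c, hfi, hc⟩
  · exact .of_forall fun J => J.cov_eq_zero_of_left_const (hu.trans hc) v
  rcases hg.const_or_exists hT with ⟨d, hd⟩ | ⟨j, d, hgj, hd⟩
  · exact .of_forall fun J => J.cov_eq_zero_of_right_const u (hv.trans hd)
  filter_upwards [eventually_integral_eq_zero hT.measurePreserving hfi hgj hc hd] with J hJ
  rw [J.cov_eq_integral hu hv, hJ, hfi.integral_eq_zero hT.measurePreserving hc, mul_zero, sub_zero]

end PrimePowerJoining

/-- A uniformly bounded family of additive, absolutely homogeneous functionals that tends to zero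
on a set with dense span tends to zero everywhere. -/
theorem tendsto_zero_of_dense_span {ι E : Type*} [NormedAddCommGroup E] [NormedSpace ℂ E]
    {l : Filter ι} {F : ι → E → ℂ} {C : ℝ} (hadd : ∀ i u u', F i (u + u') = F i u + F i u')
    (hsmul : ∀ i (a : ℂ) u, ‖F i (a • u)‖ = ‖a‖ * ‖F i u‖) (hF : ∀ i u, ‖F i u‖ ≤ C * ‖u‖)
    {s : Set E} (hs : Dense (Submodule.span ℂ s : Set E))
    (h : ∀ u ∈ s, Tendsto (fun i => F i u) l (nhds 0)) (u : E) :
    Tendsto (fun i => F i u) l (nhds 0) := by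
  have hspan : ∀ w ∈ Submodule.span ℂ s, Tendsto (fun i => F i w) l (nhds 0) := by
    intro w hw
    induction hw using Submodule.span_induction with
    | mem w hw => exact h w hw
    | zero =>
      refine tendsto_const_nhds.congr fun i => ?_
      exact (norm_eq_zero.1 (by simpa using hsmul i 0 0)).symm
    | add w w' _ _ hw hw' => simpa [hadd] using hw.add hw'
    | smul a w _ hw =>
      rw [tendsto_zero_iff_norm_tendsto_zero] at hw ⊢
      simpa [hsmul] using hw.const_mul ‖a‖
  rw [Metric.tendsto_nhds]
  intro ε hε
  have hC : 0 < |C| + 1 := by positivity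
  obtain ⟨w, hw, hdist⟩ := Metric.dense_iff.1 hs u (ε / 2 / (|C| + 1)) (by positivity)
  filter_upwards [Metric.tendsto_nhds.1 (hspan w hdist) (ε / 2) (by positivity)] with i hi
  rw [dist_zero_right] at hi ⊢
  rw [Metric.mem_ball, dist_comm, dist_eq_norm, lt_div_iff₀ hC] at hw
  have h1 : ‖F i (u - w)‖ < ε / 2 := by
    refine (hF i _).trans_lt (lt_of_le_of_lt ?_ hw)
    rw [mul_comm]
    gcongr
    linarith [le_abs_self C]
  have h2 : F i u = F i (u - w) + F i w := by rw [← hadd, sub_add_cancel]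
  rw [h2]
  linarith [norm_add_le (F i (u - w)) (F i w)]

theorem QuasiDiscreteSpectrum.tendsto_cov {X : Type*} [MeasurableSpace X] {T : X → X}
    {μ : Measure X} [IsProbabilityMeasure μ] (h : QuasiDiscreteSpectrum T μ) (u v : Lp ℂ 2 μ) :
    Tendsto (fun J : PrimePowerJoining T μ => J.cov u v)
      (PrimePowerJoining.largeExponents T μ) (nhds 0) := by
  refine tendsto_zero_of_dense_span (C := 2 * ‖v‖)
    (F := fun (J : PrimePowerJoining T μ) u => J.cov u v)
    (fun J u u' => J.cov_add_left u u' v) (fun J a u => by rw [J.cov_smul_left, norm_mul])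
    (fun J u => (J.norm_cov_le u v).trans_eq (by ring)) h.2 ?_ u
  rintro u ⟨k, f, hf, hu⟩
  refine tendsto_zero_of_dense_span (C := 2 * ‖u‖)
    (F := fun (J : PrimePowerJoining T μ) v => J.cov u v)
    (fun J v v' => J.cov_add_right u v v')
    (fun J a v => by rw [J.cov_smul_right, norm_mul, RCLike.norm_conj])
    (fun J v => J.norm_cov_le u v) h.2 ?_ v
  rintro v ⟨l, g, hg, hv⟩
  exact PrimePowerJoining.tendsto_cov_of_mem h.1 hf hg hu hv

/-- **Theorem 3.6.** Every automorphism of a standard Borel probability space with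
quasi-discrete spectrum has the AOP property. -/
theorem aop_of_quasiDiscreteSpectrum
    {X : Type*} [MeasurableSpace X] [StandardBorelSpace X]
    (μ : Measure X) [IsProbabilityMeasure μ] (T : X ≃ᵐ X)
    (hT : MeasurePreserving T μ μ)
    (hqds : QuasiDiscreteSpectrum (⇑T) μ) :
    AOP (⇑T) μ := by
  intro f g hf hg hf0 _ ε hε
  have h := (Metric.tendsto_nhds.1 (hqds.tendsto_cov (hf.toLp f) (hg.toLp g))) ε hε
  obtain ⟨N, hN⟩ := PrimePowerJoining.eventually_largeExponents.1 h
  refine ⟨N, fun r s hr hs hne hNr hNs κ _ hfst hsnd hκ => ?_⟩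
  have hJ := hN ⟨r, s, κ, hr, hs, hne, ⟨measurable_fst, hfst⟩, ⟨measurable_snd, hsnd⟩,
    hκ.toMeasurePreserving⟩ hNr hNs
  rw [dist_zero_right, PrimePowerJoining.cov_eq_integral _ hf.coeFn_toLp hg.coeFn_toLp, hf0,
    mul_zero, sub_zero] at hJ
  exact hJ.le
end

section
/- Let X be a compact connected metrizable abelian topological group, A : X → X a continuous group automorphism, and b ∈ X, and define T : X → X by Tx = Ax + b. Assume that the subgroup generated by (A−I)X and b is dense in X, and that for every continuous character χ of X there exists m ≥ 0 with χ∘(A−I)^m = 1. Let u : ℕ → ℂ be multiplicative with |u(n)| ≤ 1 for all n. Then for every continuous character χ ≠ 1 of X, every increasing sequence 1 = b₁ < b₂ < ⋯ of integers with b_{k+1} − b_k → ∞, and every sequence (z_k) of points of X, one has (1/b_{K+1}) Σ_{k ≤ K} | Σ_{b_k+1 ≤ n < b_{k+1}} χ(Tⁿ z_k) u(n) | → 0 as K → ∞. -/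
open MeasureTheory Filter

/-- `f` is a polynomial sequence of degree at most `d` whose `d`-th difference is constantly `w`. -/
def IsPolySeq {G : Type*} [CommGroup G] : ℕ → G → (ℕ → G) → Prop
  | 0, w, f => ∀ n, f n = w
  | d + 1, w, f => IsPolySeq d w (fun n => f (n + 1) / f n)

namespace IsPolySeq

variable {G : Type*} [CommGroup G]

lemma mul {d : ℕ} : ∀ {v w : G} {f g : ℕ → G}, IsPolySeq d v f → IsPolySeq d w g →
    IsPolySeq d (v * w) (fun n => f n * g n) := by
  induction d with
  | zero => intro v w f g hf hg n; exact congrArg₂ _ (hf n) (hg n)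
  | succ d ih =>
    intro v w f g hf hg
    have := ih hf hg
    simp only [IsPolySeq]
    convert this using 2 with n
    exact mul_div_mul_comm _ _ _ _

lemma inv {d : ℕ} : ∀ {w : G} {f : ℕ → G}, IsPolySeq d w f →
    IsPolySeq d w⁻¹ (fun n => (f n)⁻¹) := by
  induction d with
  | zero => intro w f hf n; exact congrArg _ (hf n)
  | succ d ih =>
    intro w f hf
    have := ih hf
    simp only [IsPolySeq]
    convert this using 2 with n
    simp [div_eq_mul_inv, mul_comm]

lemma div {d : ℕ} {v w : G} {f g : ℕ → G} (hf : IsPolySeq d v f) (hg : IsPolySeq d w g) :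
    IsPolySeq d (v / w) (fun n => f n / g n) := by
  simpa only [div_eq_mul_inv] using hf.mul hg.inv

lemma shift {d : ℕ} (a : ℕ) : ∀ {w : G} {f : ℕ → G}, IsPolySeq d w f →
    IsPolySeq d w (fun n => f (n + a)) := by
  induction d with
  | zero => intro w f hf n; exact hf _
  | succ d ih =>
    intro w f hf
    have := ih hf
    simp only [IsPolySeq]
    convert this using 4 with n
    omega

lemma one (d : ℕ) : IsPolySeq d (1 : G) (fun _ => 1) := by
  induction d with
  | zero => intro n; rfl
  | succ d ih => simpa [IsPolySeq] using ih

lemma const (d : ℕ) (c : G) : IsPolySeq (d + 1) 1 (fun _ => c) := by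
  simpa [IsPolySeq] using one (G := G) d

lemma shift_div {d : ℕ} {w : G} {f : ℕ → G} (hf : IsPolySeq (d + 1) w f) (h : ℕ) :
    IsPolySeq d (w ^ h) (fun n => f (n + h) / f n) := by
  induction h with
  | zero => simpa using one (G := G) d
  | succ h ih =>
    have h1 : IsPolySeq d w (fun n => f (n + h + 1) / f (n + h)) :=
      shift (d := d) (f := fun n => f (n + 1) / f n) h hf
    have := ih.mul h1
    rw [← pow_succ] at this
    convert this using 2 with n
    rw [← add_assoc, mul_comm, div_mul_div_cancel]

lemma dilate {d : ℕ} (p : ℕ) : ∀ {w : G} {f : ℕ → G}, IsPolySeq d w f →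
    IsPolySeq d (w ^ p ^ d) (fun n => f (p * n)) := by
  induction d with
  | zero => intro w f hf n; simpa using hf _
  | succ d ih =>
    intro w f hf
    have := ih (hf.shift_div p)
    rw [← pow_mul, ← pow_succ'] at this
    exact this

end IsPolySeq

lemma le_sqrt_mul_add_of_sq_le {a C x S : ℝ} (ha : 1 ≤ a) (hC : 0 ≤ C) (hx : 0 ≤ x)
    (h : S ^ 2 ≤ x * (a * x + C)) : S ≤ √a * x + C := by
  have h1 : 1 ≤ √a := Real.one_le_sqrt.2 ha
  have h2 : √a ^ 2 = a := Real.sq_sqrt (by linarith)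
  refine le_of_sq_le_sq ?_ (by positivity)
  have : x * C ≤ √a * (x * C) := le_mul_of_one_le_left (by positivity) h1
  nlinarith [mul_nonneg hx hC, sq_nonneg C]

/-- Averaging a bounded sequence over short shifts barely changes its partial sums. -/
lemma norm_smul_sum_sub_sum_shift_le (g : ℕ → ℂ) (hg : ∀ n, ‖g n‖ ≤ 1) (N H : ℕ) :
    ‖(H : ℂ) * ∑ n ∈ Finset.range N, g n
      - ∑ n ∈ Finset.range N, ∑ h ∈ Finset.range H, g (n + h)‖ ≤ 2 * (H : ℝ) ^ 2 := by
  have key : ∀ h ∈ Finset.range H, ‖∑ n ∈ Finset.range N, g n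
      - ∑ n ∈ Finset.range N, g (n + h)‖ ≤ 2 * (H : ℝ) := by
    intro h hh
    have hb : ∀ a, ‖∑ n ∈ Finset.range h, g (a + n)‖ ≤ h := fun a =>
      (norm_sum_le_of_le _ fun n _ => hg (a + n)).trans (by simp)
    have e1 := Finset.sum_range_add g N h
    have e2 := Finset.sum_range_add g h N
    rw [add_comm h N, e1] at e2
    have e3 : ∑ n ∈ Finset.range N, g n - ∑ n ∈ Finset.range N, g (n + h)
        = ∑ n ∈ Finset.range h, g n - ∑ n ∈ Finset.range h, g (N + n) := by
      simp only [add_comm _ h]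
      linear_combination e2
    rw [e3]
    have h0 := hb 0
    simp only [zero_add] at h0
    have : (h : ℝ) ≤ H := by exact_mod_cast (Finset.mem_range.1 hh).le
    linarith [norm_sub_le (∑ n ∈ Finset.range h, g n) (∑ n ∈ Finset.range h, g (N + n)), hb N]
  rw [Finset.sum_comm]
  have : (H : ℂ) * ∑ n ∈ Finset.range N, g n
      = ∑ h ∈ Finset.range H, ∑ n ∈ Finset.range N, g n := by simp
  rw [this, ← Finset.sum_sub_distrib]
  refine (norm_sum_le_of_le _ key).trans (le_of_eq ?_)
  simp; ring

/-- Expanding the square in a sum of `‖∑ i, a i n‖ ^ 2` into correlations. -/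
lemma sum_norm_sum_sq_le {ι : Type*} (s : Finset ι) (t : Finset ℕ) (a : ι → ℕ → ℂ) :
    ∑ n ∈ t, ‖∑ i ∈ s, a i n‖ ^ 2
      ≤ ∑ i ∈ s, ∑ j ∈ s, ‖∑ n ∈ t, a i n * (starRingEnd ℂ) (a j n)‖ := by
  have e : ((∑ n ∈ t, ‖∑ i ∈ s, a i n‖ ^ 2 : ℝ) : ℂ)
      = ∑ i ∈ s, ∑ j ∈ s, ∑ n ∈ t, a i n * (starRingEnd ℂ) (a j n) := by
    push_cast
    simp_rw [← Complex.mul_conj', map_sum, Finset.sum_mul_sum]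
    rw [Finset.sum_comm]
    refine Finset.sum_congr rfl fun i _ => ?_
    rw [Finset.sum_comm]
  have h0 : (0 : ℝ) ≤ ∑ n ∈ t, ‖∑ i ∈ s, a i n‖ ^ 2 := Finset.sum_nonneg fun _ _ => by positivity
  rw [← abs_of_nonneg h0, ← Real.norm_eq_abs, ← Complex.norm_real, e]
  exact norm_sum_le_of_le _ fun i _ => norm_sum_le _ _

/-- Bound for a sum of `‖∑ i, a i n‖ ^ 2` from separate bounds for the diagonal and off-diagonal
correlations. -/
lemma sum_norm_sum_sq_le_of_correlation {ι : Type*} (s : Finset ι) (t : Finset ℕ) (a : ι → ℕ → ℂ)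
    {D E : ℝ} (hE0 : 0 ≤ E)
    (hD : ∑ i ∈ s, ∑ n ∈ t, ‖a i n‖ ^ 2 ≤ D)
    (hE : ∀ i ∈ s, ∀ j ∈ s, i ≠ j → ‖∑ n ∈ t, a i n * (starRingEnd ℂ) (a j n)‖ ≤ E) :
    ∑ n ∈ t, ‖∑ i ∈ s, a i n‖ ^ 2 ≤ D + (s.card : ℝ) ^ 2 * E := by
  classical
  refine (sum_norm_sum_sq_le s t a).trans ?_
  have h1 : ∀ i ∈ s, ∑ j ∈ s, ‖∑ n ∈ t, a i n * (starRingEnd ℂ) (a j n)‖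
      ≤ ∑ n ∈ t, ‖a i n‖ ^ 2 + s.card * E := by
    intro i hi
    have h2 : ∀ j ∈ s, ‖∑ n ∈ t, a i n * (starRingEnd ℂ) (a j n)‖
        ≤ (if i = j then ∑ n ∈ t, ‖a i n‖ ^ 2 else 0) + E := by
      intro j hj
      split_ifs with hij
      · subst hij
        have : ‖∑ n ∈ t, a i n * (starRingEnd ℂ) (a i n)‖ ≤ ∑ n ∈ t, ‖a i n‖ ^ 2 :=
          norm_sum_le_of_le _ fun n _ => by simp [sq]
        linarith
      · simpa using hE i hi j hj hij
    refine (Finset.sum_le_sum h2).trans (le_of_eq ?_)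
    simp [Finset.sum_add_distrib, hi]
  refine (Finset.sum_le_sum h1).trans ?_
  rw [Finset.sum_add_distrib]
  simp only [Finset.sum_const, nsmul_eq_mul]
  nlinarith

lemma circle_norm_sum_pow_le {w : Circle} (hw : w ≠ 1) (N : ℕ) :
    ‖∑ n ∈ Finset.range N, ((w ^ n : Circle) : ℂ)‖ ≤ 2 / ‖(w : ℂ) - 1‖ := by
  have hw' : (w : ℂ) ≠ 1 := fun h => hw (Circle.ext (by simpa using h))
  simp only [Circle.coe_pow]
  rw [geom_sum_eq hw', norm_div]
  gcongr
  refine (norm_sub_le _ _).trans ?_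
  rw [norm_pow, Circle.norm_coe]
  norm_num

/-- Weyl's estimate, uniform over all polynomial phases with a given leading coefficient of
infinite order. -/
lemma weyl_bound (d : ℕ) : ∀ w : Circle, (∀ k : ℕ, 0 < k → w ^ k ≠ 1) → ∀ ε : ℝ, 0 < ε →
    ∃ C : ℝ, 0 ≤ C ∧ ∀ f : ℕ → Circle, IsPolySeq (d + 1) w f → ∀ N : ℕ,
      ‖∑ n ∈ Finset.range N, (f n : ℂ)‖ ≤ ε * N + C := by
  induction d with
  | zero =>
    intro w hw ε hε
    have hw1 : w ≠ 1 := by simpa using hw 1 one_pos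
    refine ⟨2 / ‖(w : ℂ) - 1‖, by positivity, fun f hf N => ?_⟩
    have hfn : ∀ n, f n = f 0 * w ^ n := by
      intro n
      induction n with
      | zero => simp
      | succ n ih =>
        have := hf n
        rw [div_eq_iff_eq_mul] at this
        rw [this, ih, pow_succ]; exact mul_comm _ _ |>.trans (mul_assoc _ _ _)
    have e : ∑ n ∈ Finset.range N, (f n : ℂ)
        = (f 0 : ℂ) * ∑ n ∈ Finset.range N, ((w ^ n : Circle) : ℂ) := by
      rw [Finset.mul_sum]
      exact Finset.sum_congr rfl fun n _ => by rw [hfn n, Circle.coe_mul]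
    rw [e, norm_mul, Circle.norm_coe, one_mul]
    have := circle_norm_sum_pow_le hw1 N
    have : 0 ≤ ε * N := by positivity
    linarith
  | succ d ih =>
    intro w hw ε hε
    obtain ⟨H, hH⟩ := exists_nat_gt (max 1 (2 / ε ^ 2))
    have hH1 : (1 : ℝ) < H := (le_max_left _ _).trans_lt hH
    have hHε : 2 / ε ^ 2 < H := (le_max_right _ _).trans_lt hH
    have hHpos : (0 : ℝ) < H := by linarith
    have hpow : ∀ h : ℕ, 0 < h → ∀ k : ℕ, 0 < k → (w ^ h) ^ k ≠ 1 := fun h hh k hk => by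
      rw [← pow_mul]; exact hw _ (Nat.mul_pos hh hk)
    have hex : ∀ h : ℕ, ∃ C : ℝ, 0 ≤ C ∧ (0 < h → ∀ f : ℕ → Circle, IsPolySeq (d + 1) (w ^ h) f →
        ∀ N : ℕ, ‖∑ n ∈ Finset.range N, (f n : ℂ)‖ ≤ (1 / H : ℝ) * N + C) := by
      intro h
      rcases Nat.eq_zero_or_pos h with rfl | hh
      · exact ⟨0, le_rfl, fun h => absurd h (lt_irrefl _)⟩
      · obtain ⟨C, hC, h1⟩ := ih (w ^ h) (hpow h hh) (1 / H) (by positivity)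
        exact ⟨C, hC, fun _ => h1⟩
    choose C hC0 hC using hex
    set M := ∑ h ∈ Finset.range H, C h with hM
    have hM0 : 0 ≤ M := Finset.sum_nonneg fun h _ => hC0 h
    refine ⟨H * M + 2 * H, by positivity, fun f hf N => ?_⟩
    have hcorr_lt : ∀ i j : ℕ, i < j → j < H →
        ‖∑ n ∈ Finset.range N, (f (n + j) : ℂ) * (starRingEnd ℂ) (f (n + i) : ℂ)‖
          ≤ (1 / H : ℝ) * N + M := by
      intro i j hij hj
      obtain ⟨h, rfl⟩ := Nat.exists_eq_add_of_lt hij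
      have hp := (hf.shift i).shift_div (h + 1)
      have := hC (h + 1) (Nat.succ_pos _) _ hp N
      have hle : C (h + 1) ≤ M := Finset.single_le_sum (f := C) (fun h _ => hC0 h)
        (Finset.mem_range.2 (by omega))
      refine le_trans (le_of_eq ?_) (this.trans (by linarith))
      congr 1
      refine Finset.sum_congr rfl fun n _ => ?_
      rw [Circle.coe_div, div_eq_mul_inv, ← Circle.coe_inv, Circle.coe_inv_eq_conj]
      congr 3
      omega
    have hcorr : ∀ i ∈ Finset.range H, ∀ j ∈ Finset.range H, i ≠ j →
        ‖∑ n ∈ Finset.range N, (f (n + i) : ℂ) * (starRingEnd ℂ) (f (n + j) : ℂ)‖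
          ≤ (1 / H : ℝ) * N + M := by
      intro i hi j hj hij
      rcases lt_or_gt_of_ne hij with h | h
      · have := hcorr_lt i j h (Finset.mem_range.1 hj)
        rw [← RCLike.norm_conj, map_sum] at this
        simpa [mul_comm] using this
      · exact hcorr_lt j i h (Finset.mem_range.1 hi)
    have hsq := sum_norm_sum_sq_le_of_correlation (Finset.range H) (Finset.range N)
      (fun h n => (f (n + h) : ℂ)) (D := H * N) (by positivity) (by simp [Circle.norm_coe]) hcorr
    have hcs := sq_sum_le_card_mul_sum_sq (s := Finset.range N)
      (f := fun n => ‖∑ h ∈ Finset.range H, (f (n + h) : ℂ)‖)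
    have hle := le_sqrt_mul_add_of_sq_le (a := 2 * H) (C := H ^ 2 * M) (x := N)
      (S := ∑ n ∈ Finset.range N, ‖∑ h ∈ Finset.range H, (f (n + h) : ℂ)‖)
      (by linarith) (by positivity) (by positivity) (by
        refine hcs.trans ?_
        rw [Finset.card_range] at hsq ⊢
        gcongr
        refine hsq.trans (le_of_eq ?_)
        field_simp; ring)
    have hsm := norm_smul_sum_sub_sum_shift_le (fun n => (f n : ℂ))
      (fun n => (Circle.norm_coe _).le) N H
    have hsq2 : √(2 * H) ≤ ε * H := by
      apply Real.sqrt_le_iff.2 ⟨by positivity, ?_⟩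
      rw [div_lt_iff₀ (by positivity)] at hHε
      nlinarith
    have h3 := norm_sum_le (Finset.range N) (fun n => ∑ h ∈ Finset.range H, (f (n + h) : ℂ))
    have h4 := norm_le_norm_add_norm_sub' ((H : ℂ) * ∑ n ∈ Finset.range N, (f n : ℂ))
      (∑ n ∈ Finset.range N, ∑ h ∈ Finset.range H, (f (n + h) : ℂ))
    rw [norm_mul, Complex.norm_natCast] at h4
    have h5 : √(2 * H) * N ≤ ε * H * N := by gcongr
    have : (H : ℝ) * ‖∑ n ∈ Finset.range N, (f n : ℂ)‖ ≤ H * (ε * N + (H * M + 2 * H)) := by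
      nlinarith
    exact le_of_mul_le_mul_left this hHpos

lemma filter_dvd_range_eq_image {d : ℕ} (hd : 0 < d) (N : ℕ) :
    (Finset.range N).filter (d ∣ ·) = (Finset.range ((N + d - 1) / d)).image (d * ·) := by
  have key : ∀ m, m < (N + d - 1) / d ↔ d * m < N := fun m => by
    rw [Nat.lt_iff_add_one_le, Nat.le_div_iff_mul_le hd, add_mul, mul_comm m d]
    omega
  ext n
  simp only [Finset.mem_filter, Finset.mem_range, Finset.mem_image]
  constructor
  · rintro ⟨hn, m, rfl⟩
    exact ⟨m, (key m).2 hn, rfl⟩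
  · rintro ⟨m, hm, rfl⟩
    exact ⟨(key m).1 hm, Dvd.intro m rfl⟩

lemma sum_range_ite_dvd {M : Type*} [AddCommMonoid M] {d : ℕ} (hd : 0 < d) (N : ℕ) (g : ℕ → M) :
    ∑ n ∈ Finset.range N, (if d ∣ n then g n else 0)
      = ∑ m ∈ Finset.range ((N + d - 1) / d), g (d * m) := by
  rw [← Finset.sum_filter, filter_dvd_range_eq_image hd, Finset.sum_image]
  exact fun a _ b _ h => Nat.eq_of_mul_eq_mul_left hd h

lemma div_le_ceilDiv {d : ℕ} (hd : 0 < d) (N : ℕ) :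
    (N : ℝ) / d ≤ ((N + d - 1) / d : ℕ) := by
  rw [div_le_iff₀ (by exact_mod_cast hd)]
  have h1 := Nat.div_add_mod (N + d - 1) d
  have h2 := Nat.mod_lt (N + d - 1) hd
  rw [mul_comm] at h1
  have : N ≤ (N + d - 1) / d * d := by omega
  exact_mod_cast this

lemma ceilDiv_le_div_add_one {d : ℕ} (hd : 0 < d) (N : ℕ) :
    (((N + d - 1) / d : ℕ) : ℝ) ≤ (N : ℝ) / d + 1 := by
  have hd' : (0 : ℝ) < d := by exact_mod_cast hd
  have h : (N + d - 1) / d * d ≤ N + d := (Nat.div_mul_le_self _ _).trans (Nat.sub_le _ _)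
  have h' : (((N + d - 1) / d : ℕ) : ℝ) * d ≤ N + d := by exact_mod_cast h
  rw [← sub_le_iff_le_add, le_div_iff₀ hd']
  linarith

/-- The Turán–Kubilius inequality for a fixed finite set of primes. -/
lemma turan_kubilius (P : Finset ℕ) (hP : ∀ p ∈ P, p.Prime) (N : ℕ) :
    ∑ n ∈ Finset.range N, ‖∑ p ∈ P, ((if p ∣ n then 1 else 0) - 1 / (p : ℂ))‖ ^ 2
      ≤ (∑ p ∈ P, 1 / (p : ℝ)) * N + (P.card + P.card ^ 2 * 2) := by
  have hreal : ∀ p n : ℕ, ((if p ∣ n then 1 else 0) - 1 / (p : ℂ))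
      = (((if p ∣ n then 1 else 0) - 1 / (p : ℝ) : ℝ) : ℂ) := fun p n => by
    push_cast; split_ifs <;> simp
  have hcount : ∀ d : ℕ, 0 < d → ∑ n ∈ Finset.range N, (if d ∣ n then (1 : ℝ) else 0)
      = ((N + d - 1) / d : ℕ) := fun d hd => by
    rw [sum_range_ite_dvd hd]; simp
  rw [← add_assoc]
  refine sum_norm_sum_sq_le_of_correlation P (Finset.range N) _ (by norm_num) ?_ ?_
  · have : ∀ p ∈ P, ∑ n ∈ Finset.range N, ‖((if p ∣ n then 1 else 0) - 1 / (p : ℂ))‖ ^ 2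
        ≤ 1 / (p : ℝ) * N + 1 := by
      intro p hp
      have hp0 := (hP p hp).pos
      have hp2 : (2 : ℝ) ≤ p := by exact_mod_cast (hP p hp).two_le
      have e : ∀ n, ‖((if p ∣ n then 1 else 0) - 1 / (p : ℂ))‖ ^ 2
          = (1 - 2 / p) * (if p ∣ n then (1 : ℝ) else 0) + 1 / (p : ℝ) ^ 2 := fun n => by
        rw [hreal, Complex.norm_real, Real.norm_eq_abs, sq_abs]
        split_ifs <;> ring
      simp_rw [e]
      rw [Finset.sum_add_distrib, ← Finset.mul_sum, hcount p hp0]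
      have h1 : (2 : ℝ) / p ≤ 1 := by rw [div_le_one (by linarith)]; exact hp2
      have h2 := ceilDiv_le_div_add_one hp0 N
      have h3 := mul_le_mul_of_nonneg_left h2 (sub_nonneg.2 h1)
      have h4 : 0 ≤ (N : ℝ) / p ^ 2 := by positivity
      have h5 : 0 ≤ (2 : ℝ) / p := by positivity
      have e2 : (1 - 2 / (p : ℝ)) * (N / p + 1)
          = 1 / (p : ℝ) * N + 1 - 2 / p - 2 * (N / p ^ 2) := by
        field_simp; ring
      simp only [Finset.sum_const, Finset.card_range, nsmul_eq_mul, mul_one_div]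
      linarith
    refine (Finset.sum_le_sum this).trans (le_of_eq ?_)
    rw [Finset.sum_add_distrib, Finset.sum_mul]; simp
  · intro p hp q hq hpq
    have hp0 := (hP p hp).pos
    have hq0 := (hP q hq).pos
    have hp2 : (2 : ℝ) ≤ p := by exact_mod_cast (hP p hp).two_le
    have hq2 : (2 : ℝ) ≤ q := by exact_mod_cast (hP q hq).two_le
    have hcop : Nat.Coprime p q := (Nat.coprime_primes (hP p hp) (hP q hq)).2 hpq
    simp_rw [hreal, Complex.conj_ofReal, ← Complex.ofReal_mul]
    rw [← Complex.ofReal_sum, Complex.norm_real, Real.norm_eq_abs]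
    have e : ∀ n, ((if p ∣ n then 1 else 0) - 1 / (p : ℝ))
          * ((if q ∣ n then 1 else 0) - 1 / (q : ℝ))
        = (if p * q ∣ n then (1 : ℝ) else 0) - 1 / q * (if p ∣ n then (1 : ℝ) else 0)
          - 1 / p * (if q ∣ n then (1 : ℝ) else 0) + 1 / (p * q) := fun n => by
      have : p * q ∣ n ↔ p ∣ n ∧ q ∣ n :=
        ⟨fun h => ⟨dvd_of_mul_right_dvd h, dvd_of_mul_left_dvd h⟩,
          fun h => hcop.mul_dvd_of_dvd_of_dvd h.1 h.2⟩
      by_cases h1 : p ∣ n <;> by_cases h2 : q ∣ n <;> simp [this, h1, h2] <;> ring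
    simp_rw [e]
    rw [Finset.sum_add_distrib, Finset.sum_sub_distrib, Finset.sum_sub_distrib, ← Finset.mul_sum,
      ← Finset.mul_sum, hcount p hp0, hcount q hq0, hcount (p * q) (Nat.mul_pos hp0 hq0)]
    have a1 := ceilDiv_le_div_add_one hp0 N
    have a2 := ceilDiv_le_div_add_one hq0 N
    have a3 := ceilDiv_le_div_add_one (Nat.mul_pos hp0 hq0) N
    have b1 := div_le_ceilDiv hp0 N
    have b2 := div_le_ceilDiv hq0 N
    have b3 := div_le_ceilDiv (Nat.mul_pos hp0 hq0) N
    push_cast at a3 b3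
    have ip : (1 : ℝ) / p ≤ 1 := by rw [div_le_one (by linarith)]; linarith
    have iq : (1 : ℝ) / q ≤ 1 := by rw [div_le_one (by linarith)]; linarith
    have ip0 : (0 : ℝ) ≤ 1 / p := by positivity
    have iq0 : (0 : ℝ) ≤ 1 / q := by positivity
    have a1' := mul_le_mul_of_nonneg_left a1 iq0
    have a2' := mul_le_mul_of_nonneg_left a2 ip0
    have b1' := mul_le_mul_of_nonneg_left b1 iq0
    have b2' := mul_le_mul_of_nonneg_left b2 ip0
    have e1 : (1 : ℝ) / q * (N / p) = N / (p * q) := by field_simp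
    have e2 : (1 : ℝ) / p * (N / q) = N / (p * q) := by field_simp
    simp only [Finset.sum_const, Finset.card_range, nsmul_eq_mul, mul_one_div]
    rw [mul_add, e1] at a1'
    rw [mul_add, e2] at a2'
    rw [e1] at b1'
    rw [e2] at b2'
    rw [abs_le]
    constructor <;> linarith

lemma exists_finset_primes_le_sum_one_div (B : ℝ) :
    ∃ P : Finset ℕ, (∀ p ∈ P, p.Prime) ∧ B ≤ ∑ p ∈ P, 1 / (p : ℝ) := by
  by_contra! h
  refine Nat.Primes.not_summable_one_div ?_
  refine summable_of_sum_le (c := B) (fun _ => by positivity) fun s => ?_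
  let e : Nat.Primes ↪ ℕ := ⟨(↑), Nat.Primes.coe_nat_injective⟩
  have hs := h (s.map e) (by
    intro p hp
    obtain ⟨q, -, rfl⟩ := Finset.mem_map.1 hp
    exact q.2)
  exact ((Finset.sum_map s e fun p : ℕ => 1 / (p : ℝ)).symm.trans_lt hs).le

/-- Replacing `u (p * m)` by `u p * u m` costs only the terms with `p ∣ m`. -/
lemma norm_sum_dilate_sub_le {f u : ℕ → ℂ} (hf : ∀ n, ‖f n‖ ≤ 1)
    (hmul : ∀ m n : ℕ, Nat.Coprime m n → u (m * n) = u m * u n) (hu : ∀ n, ‖u n‖ ≤ 1)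
    {p : ℕ} (hp : p.Prime) (N : ℕ) :
    ‖∑ m ∈ Finset.range ((N + p - 1) / p), f (p * m) * u (p * m)
      - ∑ m ∈ Finset.range ((N + p - 1) / p), f (p * m) * (u p * u m)‖
      ≤ 2 * (1 / (p : ℝ) ^ 2) * N + 4 := by
  have hp1 : (1 : ℝ) ≤ p := by exact_mod_cast hp.one_le
  rw [← Finset.sum_sub_distrib]
  have hterm : ∀ m ∈ Finset.range ((N + p - 1) / p),
      ‖f (p * m) * u (p * m) - f (p * m) * (u p * u m)‖ ≤ if p ∣ m then 2 else 0 := by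
    intro m _
    split_ifs with h
    · rw [← mul_sub, norm_mul]
      have h1 : ‖u p * u m‖ ≤ 1 := by
        rw [norm_mul]; exact mul_le_one₀ (hu p) (norm_nonneg _) (hu m)
      have h2 : ‖u (p * m) - u p * u m‖ ≤ 2 := (norm_sub_le _ _).trans (by linarith [hu (p * m)])
      nlinarith [hf (p * m), norm_nonneg (f (p * m)), norm_nonneg (u (p * m) - u p * u m)]
    · rw [hmul p m ((Nat.Prime.coprime_iff_not_dvd hp).2 h), sub_self, norm_zero]
  refine (norm_sum_le_of_le _ hterm).trans ?_
  rw [sum_range_ite_dvd hp.pos]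
  simp only [Finset.sum_const, Finset.card_range, nsmul_eq_mul]
  have h1 := ceilDiv_le_div_add_one hp.pos ((N + p - 1) / p)
  have h2 := ceilDiv_le_div_add_one hp.pos N
  have h3 : (((N + p - 1) / p : ℕ) : ℝ) / p ≤ (N / p + 1) / p := by gcongr
  have h4 : (1 : ℝ) / p ≤ 1 := by rw [div_le_one (by linarith)]; exact hp1
  have e : ((N : ℝ) / p + 1) / p = 1 / (p : ℝ) ^ 2 * N + 1 / p := by field_simp
  linarith

/-- The Kátai–Bourgain–Sarnak–Ziegler criterion. -/
lemma katai_criterion {f u : ℕ → ℂ} (hf : ∀ n, ‖f n‖ ≤ 1)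
    (hmul : ∀ m n : ℕ, Nat.Coprime m n → u (m * n) = u m * u n) (hu : ∀ n, ‖u n‖ ≤ 1)
    (hcorr : ∀ p q : ℕ, p.Prime → q.Prime → p ≠ q → ∀ ε : ℝ, 0 < ε → ∃ C : ℝ, 0 ≤ C ∧ ∀ N : ℕ,
      ‖∑ m ∈ Finset.range N, f (p * m) * (starRingEnd ℂ) (f (q * m))‖ ≤ ε * N + C)
    {ε : ℝ} (hε : 0 < ε) :
    ∃ C : ℝ, 0 ≤ C ∧ ∀ N : ℕ, ‖∑ n ∈ Finset.range N, f n * u n‖ ≤ ε * N + C := by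
  obtain ⟨C₀, hC₀⟩ : ∃ C₀ : ℝ, ∀ P : Finset ℕ, ∑ p ∈ P, 1 / (p : ℝ) ^ 2 ≤ C₀ :=
    ⟨_, fun P => (Real.summable_one_div_nat_pow.2 one_lt_two).sum_le_tsum P
      (fun _ _ => by positivity)⟩
  have hC₀_nonneg : 0 ≤ C₀ := by simpa using hC₀ ∅
  obtain ⟨P, hP, hPL⟩ := exists_finset_primes_le_sum_one_div (1 + 32 / ε ^ 2 + 4 * C₀ / ε)
  set L := ∑ p ∈ P, 1 / (p : ℝ) with hL
  have p1 : 0 < 32 / ε ^ 2 := by positivity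
  have p2 : 0 ≤ 4 * C₀ / ε := by positivity
  have hL1 : 1 ≤ L := by linarith
  have hL2 : 32 ≤ ε ^ 2 * L := by
    have : 32 / ε ^ 2 ≤ L := by linarith
    rwa [div_le_iff₀' (by positivity)] at this
  have hL3 : 4 * C₀ ≤ ε * L := by
    have : 4 * C₀ / ε ≤ L := by linarith
    rwa [div_le_iff₀' (by positivity)] at this
  have hsqrt : 2 * √(L + 1) ≤ ε * L / 2 := by
    have : √(L + 1) ≤ ε * L / 4 := Real.sqrt_le_iff.2 ⟨by positivity, by nlinarith⟩
    linarith
  set k : ℝ := (P.card : ℝ) with hk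
  have hk0 : 0 ≤ k := by positivity
  have hδ : 0 < 1 / (k ^ 2 + 1) := by positivity
  choose! C hC0 hC using fun p q => fun h : p.Prime ∧ q.Prime ∧ p ≠ q =>
    hcorr p q h.1 h.2.1 h.2.2 _ hδ
  set E := ∑ p ∈ P, ∑ q ∈ P, |C p q| with hE
  have hE0 : 0 ≤ E := Finset.sum_nonneg fun _ _ => Finset.sum_nonneg fun _ _ => abs_nonneg _
  refine ⟨(k + k ^ 2 * 2) + 4 * k + (k + k ^ 2 * E), by positivity, fun N => ?_⟩
  have hN : (0 : ℝ) ≤ N := N.cast_nonneg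
  -- the contribution of the fluctuation of the number of prime divisors
  have hfluct : ‖∑ n ∈ Finset.range N,
      f n * u n * ∑ p ∈ P, ((if p ∣ n then 1 else 0) - 1 / (p : ℂ))‖
      ≤ √(L + 1) * N + (k + k ^ 2 * 2) := by
    have h1 : ∀ n ∈ Finset.range N,
        ‖f n * u n * ∑ p ∈ P, ((if p ∣ n then 1 else 0) - 1 / (p : ℂ))‖
        ≤ ‖∑ p ∈ P, ((if p ∣ n then 1 else 0) - 1 / (p : ℂ))‖ := fun n _ => by
      rw [norm_mul, norm_mul]
      exact mul_le_of_le_one_left (norm_nonneg _) (mul_le_one₀ (hf n) (norm_nonneg _) (hu n))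
    refine (norm_sum_le_of_le _ h1).trans ?_
    refine le_sqrt_mul_add_of_sq_le (by linarith) (by positivity) hN ?_
    refine sq_sum_le_card_mul_sum_sq.trans ?_
    rw [Finset.card_range]
    gcongr
    refine (turan_kubilius P hP N).trans ?_
    gcongr
    linarith
  -- the bilinear form
  have hbil : ‖∑ p ∈ P, ∑ m ∈ Finset.range ((N + p - 1) / p), f (p * m) * (u p * u m)‖
      ≤ √(L + 1) * N + (k + k ^ 2 * E) := by
    have hM : ∀ p ∈ P, (N + p - 1) / p ≤ N := fun p hp => by
      have hp1 := (hP p hp).pos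
      rw [Nat.div_le_iff_le_mul_add_pred hp1]
      have : N ≤ p * N := Nat.le_mul_of_pos_left _ hp1
      omega
    set a : ℕ → ℕ → ℂ := fun p m => if m < (N + p - 1) / p then u p * f (p * m) else 0 with ha
    have hsum : ∀ (g : ℕ → ℂ) (M : ℕ), M ≤ N → ∑ m ∈ Finset.range N, (if m < M then g m else 0)
        = ∑ m ∈ Finset.range M, g m := fun g M hMN => by
      rw [← Finset.sum_filter]
      congr 1
      ext m
      simp only [Finset.mem_filter, Finset.mem_range]
      omega
    have e : ∑ p ∈ P, ∑ m ∈ Finset.range ((N + p - 1) / p), f (p * m) * (u p * u m)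
        = ∑ m ∈ Finset.range N, u m * ∑ p ∈ P, a p m := by
      simp_rw [Finset.mul_sum]
      rw [Finset.sum_comm (s := Finset.range N)]
      refine Finset.sum_congr rfl fun p hp => ?_
      rw [← hsum _ _ (hM p hp)]
      refine Finset.sum_congr rfl fun m _ => ?_
      simp only [ha]
      split_ifs <;> ring
    rw [e]
    have h1 : ∀ m ∈ Finset.range N, ‖u m * ∑ p ∈ P, a p m‖ ≤ ‖∑ p ∈ P, a p m‖ := fun m _ => by
      rw [norm_mul]; exact mul_le_of_le_one_left (norm_nonneg _) (hu m)
    refine (norm_sum_le_of_le _ h1).trans ?_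
    refine le_sqrt_mul_add_of_sq_le (by linarith) (by positivity) hN ?_
    refine sq_sum_le_card_mul_sum_sq.trans ?_
    rw [Finset.card_range]
    gcongr
    refine (sum_norm_sum_sq_le_of_correlation P (Finset.range N) a (D := L * N + k)
      (E := 1 / (k ^ 2 + 1) * N + E) (by positivity) ?_ ?_).trans ?_
    · have h2 : ∀ p ∈ P, ∑ m ∈ Finset.range N, ‖a p m‖ ^ 2 ≤ 1 / (p : ℝ) * N + 1 := by
        intro p hp
        have h3 : ∀ m ∈ Finset.range N,
            ‖a p m‖ ^ 2 ≤ if m < (N + p - 1) / p then (1 : ℝ) else 0 := fun m _ => by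
          simp only [ha]
          split_ifs
          · rw [norm_mul]
            exact pow_le_one₀ (by positivity) (mul_le_one₀ (hu p) (norm_nonneg _) (hf _))
          · simp
        refine (Finset.sum_le_sum h3).trans ?_
        have h4 : ∑ m ∈ Finset.range N, (if m < (N + p - 1) / p then (1 : ℝ) else 0)
            ≤ ((N + p - 1) / p : ℕ) := by
          rw [← Finset.sum_filter]
          simp only [Finset.sum_const, nsmul_eq_mul, mul_one]
          norm_cast
          calc _ ≤ (Finset.range ((N + p - 1) / p)).card := Finset.card_le_card fun m => by
                simp
            _ = _ := Finset.card_range _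
        have := ceilDiv_le_div_add_one (hP p hp).pos N
        rw [one_div_mul_eq_div]
        linarith
      refine (Finset.sum_le_sum h2).trans (le_of_eq ?_)
      rw [Finset.sum_add_distrib, hL, Finset.sum_mul]; simp [hk]
    · intro p hp q hq hpq
      have e2 : ∑ m ∈ Finset.range N, a p m * (starRingEnd ℂ) (a q m)
          = u p * (starRingEnd ℂ) (u q)
            * ∑ m ∈ Finset.range (min ((N + p - 1) / p) ((N + q - 1) / q)),
              f (p * m) * (starRingEnd ℂ) (f (q * m)) := by
        rw [← hsum _ _ ((min_le_left _ _).trans (hM p hp)), Finset.mul_sum]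
        refine Finset.sum_congr rfl fun m _ => ?_
        simp only [ha, lt_min_iff]
        by_cases h1 : m < (N + p - 1) / p <;> by_cases h2 : m < (N + q - 1) / q <;>
          simp [h1, h2]
        ring
      rw [e2, norm_mul, norm_mul, RCLike.norm_conj]
      have h5 := hC p q ⟨hP p hp, hP q hq, hpq⟩ (min ((N + p - 1) / p) ((N + q - 1) / q))
      refine (mul_le_of_le_one_left (norm_nonneg _)
        (mul_le_one₀ (hu p) (norm_nonneg _) (hu q))).trans (h5.trans ?_)
      have h6 : C p q ≤ E := (le_abs_self _).trans
        ((Finset.single_le_sum (f := fun q => |C p q|) (fun _ _ => abs_nonneg _) hq).trans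
        (Finset.single_le_sum (f := fun p => ∑ q ∈ P, |C p q|)
          (fun _ _ => Finset.sum_nonneg fun _ _ => abs_nonneg _) hp))
      gcongr
      exact (min_le_left _ _).trans (hM p hp)
    · have h7 : k ^ 2 * (1 / (k ^ 2 + 1) * N) ≤ N := by
        have : k ^ 2 * (1 / (k ^ 2 + 1)) ≤ 1 := by
          rw [mul_one_div, div_le_one (by positivity)]; linarith
        rw [← mul_assoc]
        exact mul_le_of_le_one_left hN this
      rw [mul_add]
      linarith
  have hdil : ‖∑ p ∈ P, ∑ m ∈ Finset.range ((N + p - 1) / p), f (p * m) * u (p * m)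
      - ∑ p ∈ P, ∑ m ∈ Finset.range ((N + p - 1) / p), f (p * m) * (u p * u m)‖
      ≤ 2 * C₀ * N + 4 * k := by
    rw [← Finset.sum_sub_distrib]
    refine (norm_sum_le_of_le _ fun p hp => norm_sum_dilate_sub_le hf hmul hu (hP p hp) N).trans ?_
    rw [Finset.sum_add_distrib, ← Finset.sum_mul, ← Finset.mul_sum]
    simp only [Finset.sum_const, nsmul_eq_mul]
    have := hC₀ P
    rw [mul_comm (P.card : ℝ)]
    gcongr
  have hid : (L : ℂ) * ∑ n ∈ Finset.range N, f n * u n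
      = ∑ p ∈ P, ∑ m ∈ Finset.range ((N + p - 1) / p), f (p * m) * u (p * m)
        - ∑ n ∈ Finset.range N, f n * u n * ∑ p ∈ P, ((if p ∣ n then 1 else 0) - 1 / (p : ℂ)) := by
    have e1 : ∀ p ∈ P, ∑ m ∈ Finset.range ((N + p - 1) / p), f (p * m) * u (p * m)
        = ∑ n ∈ Finset.range N, f n * u n * (if p ∣ n then 1 else 0) := fun p hp => by
      rw [← sum_range_ite_dvd (hP p hp).pos N (fun n => f n * u n)]
      simp
    rw [Finset.sum_congr rfl e1, Finset.sum_comm, ← Finset.sum_sub_distrib, Finset.mul_sum]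
    refine Finset.sum_congr rfl fun n _ => ?_
    rw [← Finset.mul_sum, Finset.sum_sub_distrib, hL]
    push_cast
    ring
  have hnorm : L * ‖∑ n ∈ Finset.range N, f n * u n‖
      = ‖(L : ℂ) * ∑ n ∈ Finset.range N, f n * u n‖ := by
    rw [norm_mul, Complex.norm_real, Real.norm_of_nonneg (by linarith)]
  have hfin : L * ‖∑ n ∈ Finset.range N, f n * u n‖
      ≤ L * (ε * N + ((k + k ^ 2 * 2) + 4 * k + (k + k ^ 2 * E))) := by
    rw [hnorm, hid]
    refine (norm_sub_le _ _).trans ?_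
    have h8 := norm_le_norm_add_norm_sub'
      (∑ p ∈ P, ∑ m ∈ Finset.range ((N + p - 1) / p), f (p * m) * u (p * m))
      (∑ p ∈ P, ∑ m ∈ Finset.range ((N + p - 1) / p), f (p * m) * (u p * u m))
    have h9 : (2 * √(L + 1) + 2 * C₀) * N ≤ ε * L * N := by gcongr; linarith
    have h10 : (k + k ^ 2 * 2) + 4 * k + (k + k ^ 2 * E)
        ≤ L * ((k + k ^ 2 * 2) + 4 * k + (k + k ^ 2 * E)) :=
      le_mul_of_one_le_left (by positivity) hL1
    linarith
  exact le_of_mul_le_mul_left hfin (by linarith)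

/-- A set of natural numbers whose counting function is `o(N)`. -/
def IsSparse (S : Set ℕ) : Prop :=
  ∀ δ : ℝ, 0 < δ → ∃ C : ℝ, 0 ≤ C ∧ ∀ N : ℕ, ∃ t : Finset ℕ, (∀ s ∈ S, s < N → s ∈ t) ∧
    (t.card : ℝ) ≤ δ * N + C

namespace IsSparse

lemma singleton (a : ℕ) : IsSparse {a} := fun δ hδ =>
  ⟨1, zero_le_one, fun N => ⟨{a}, by simp, by
    have : 0 ≤ δ * N := by positivity
    simpa using this⟩⟩

lemma union {S S' : Set ℕ} (hS : IsSparse S) (hS' : IsSparse S') : IsSparse (S ∪ S') := by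
  intro δ hδ
  obtain ⟨C, hC, h⟩ := hS (δ / 2) (by positivity)
  obtain ⟨C', hC', h'⟩ := hS' (δ / 2) (by positivity)
  refine ⟨C + C', by positivity, fun N => ?_⟩
  obtain ⟨t, ht, hc⟩ := h N
  obtain ⟨t', ht', hc'⟩ := h' N
  refine ⟨t ∪ t', ?_, ?_⟩
  · rintro s (hs | hs) hsN
    · exact Finset.mem_union_left _ (ht s hs hsN)
    · exact Finset.mem_union_right _ (ht' s hs hsN)
  · have : ((t ∪ t').card : ℝ) ≤ t.card + t'.card := by exact_mod_cast Finset.card_union_le _ _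
    linarith

lemma range_of_gap {B : ℕ → ℕ} (hgap : Tendsto (fun k => B (k + 1) - B k) atTop atTop) :
    IsSparse (Set.range B) := by
  intro δ hδ
  obtain ⟨G, hG⟩ := exists_nat_gt (1 / δ)
  have hGpos : (0 : ℝ) < G := lt_trans (by positivity) hG
  obtain ⟨k₀, hk₀⟩ := (tendsto_atTop.1 hgap G).exists_forall_of_atTop
  have hlow : ∀ j, G * j ≤ B (k₀ + j) := by
    intro j
    induction j with
    | zero => simp
    | succ j ih =>
      have h1 := hk₀ (k₀ + j) (Nat.le_add_right _ _)
      have hG0 : 0 < G := by exact_mod_cast hGpos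
      rw [mul_add, mul_one, ← add_assoc]
      omega
  refine ⟨k₀ + 1, by positivity, fun N => ⟨(Finset.range (k₀ + (N / G + 1))).image B, ?_, ?_⟩⟩
  · rintro _ ⟨k, rfl⟩ hk
    refine Finset.mem_image_of_mem _ (Finset.mem_range.2 ?_)
    rcases lt_or_ge k k₀ with h | h
    · exact h.trans_le (Nat.le_add_right _ _)
    · obtain ⟨j, rfl⟩ := Nat.exists_eq_add_of_le h
      have h2 : j ≤ N / G := by
        rw [Nat.le_div_iff_mul_le (by exact_mod_cast hGpos), mul_comm]
        exact (hlow j).trans hk.le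
      omega
  · have h1 : (((Finset.range (k₀ + (N / G + 1))).image B).card : ℝ) ≤ k₀ + ((N / G : ℕ) + 1) := by
      have := Finset.card_image_le (s := Finset.range (k₀ + (N / G + 1))) (f := B)
      rw [Finset.card_range] at this
      exact_mod_cast this
    have h2 : ((N / G : ℕ) : ℝ) ≤ N / G := Nat.cast_div_le
    have h3 : (N : ℝ) / G ≤ δ * N := by
      rw [div_le_iff₀ hGpos]
      rw [div_lt_iff₀ hδ] at hG
      nlinarith [(N.cast_nonneg : (0 : ℝ) ≤ N)]
    linarith

/-- The positions whose dilated window of length `H` meets a sparse set form a sparse set. -/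
lemma window {S : Set ℕ} (hS : IsSparse S) {p : ℕ} (hp : 0 < p) (H : ℕ) :
    IsSparse {m | ∃ s ∈ S, p * m ≤ s ∧ s < p * m + p * H} := by
  intro δ hδ
  obtain ⟨C, hC, h⟩ := hS (δ / ((H + 1) * p)) (by positivity)
  refine ⟨H * (δ * H + C), by positivity, fun N => ?_⟩
  obtain ⟨t, ht, hc⟩ := h (p * (N + H))
  refine ⟨(t ×ˢ Finset.range H).image (fun x => x.1 / p - x.2), ?_, ?_⟩
  · rintro m ⟨s, hs, h1, h2⟩ hm
    rw [← mul_add] at h2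
    have h3 : m ≤ s / p := by rw [Nat.le_div_iff_mul_le hp, mul_comm]; exact h1
    have h4 : s / p < m + H := by rw [Nat.div_lt_iff_lt_mul hp, mul_comm]; exact h2
    refine Finset.mem_image.2 ⟨(s, s / p - m), Finset.mem_product.2 ⟨ht s hs ?_, ?_⟩, ?_⟩
    · exact h2.trans_le (Nat.mul_le_mul_left _ (by omega))
    · simp only [Finset.mem_range]; omega
    · simp only; omega
  · have h1 : (((t ×ˢ Finset.range H).image (fun x => x.1 / p - x.2)).card : ℝ)
        ≤ t.card * H := by
      have := Finset.card_image_le (s := t ×ˢ Finset.range H) (f := fun x => x.1 / p - x.2)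
      rw [Finset.card_product, Finset.card_range] at this
      exact_mod_cast this
    have hp' : (0 : ℝ) < p := by exact_mod_cast hp
    have e : δ / ((H + 1) * p) * ((p * (N + H) : ℕ) : ℝ) = δ * (N + H) / (H + 1) := by
      push_cast; field_simp
    rw [e] at hc
    have h2 : δ * (N + H) / (H + 1) * H ≤ δ * N + H * (δ * H) := by
      rw [div_mul_eq_mul_div, div_le_iff₀ (by positivity)]
      have hH : (0 : ℝ) ≤ H := H.cast_nonneg
      have hN : (0 : ℝ) ≤ N := N.cast_nonneg
      nlinarith [mul_nonneg hδ.le hN, mul_nonneg hδ.le (mul_nonneg hH hH),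
        mul_nonneg hδ.le (mul_nonneg hH (mul_nonneg hH hH))]
    have h3 : (t.card : ℝ) * H ≤ (δ * (N + H) / (H + 1) + C) * H := by gcongr
    linarith

end IsSparse

/-- A bounded sequence that agrees with a polynomial phase of fixed leading coefficient of infinite
order on all windows outside a sparse set has small partial sums. -/
lemma norm_sum_le_of_locally_polySeq {g : ℕ → ℂ} (hg : ∀ n, ‖g n‖ ≤ 1) {d : ℕ} {w : Circle}
    (hw : ∀ k : ℕ, 0 < k → w ^ k ≠ 1)
    (hloc : ∀ H : ℕ, ∃ S : Set ℕ, IsSparse S ∧ ∀ m ∉ S, ∃ φ : ℕ → Circle,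
      IsPolySeq (d + 1) w φ ∧ ∀ h < H, g (m + h) = φ h)
    {ε : ℝ} (hε : 0 < ε) :
    ∃ C : ℝ, 0 ≤ C ∧ ∀ N : ℕ, ‖∑ n ∈ Finset.range N, g n‖ ≤ ε * N + C := by
  obtain ⟨W, hW0, hW⟩ := weyl_bound d w hw (ε / 3) (by positivity)
  obtain ⟨H, hH⟩ := exists_nat_gt (3 * W / ε)
  have hHpos : (0 : ℝ) < H := lt_of_le_of_lt (by positivity) hH
  rw [div_lt_iff₀ hε] at hH
  obtain ⟨S, hS, hφ⟩ := hloc H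
  obtain ⟨C, hC, hcount⟩ := hS (ε / 3) (by positivity)
  refine ⟨C + 2 * H, by positivity, fun N => ?_⟩
  obtain ⟨t, ht, hc⟩ := hcount N
  have hwin : ∀ m ∈ Finset.range N, ‖∑ h ∈ Finset.range H, g (m + h)‖
      ≤ (ε / 3 * H + W) + (if m ∈ t then (H : ℝ) else 0) := by
    intro m hm
    by_cases hmS : m ∈ S
    · rw [if_pos (ht m hmS (Finset.mem_range.1 hm))]
      have : ‖∑ h ∈ Finset.range H, g (m + h)‖ ≤ H :=
        (norm_sum_le_of_le _ fun h _ => hg (m + h)).trans (by simp)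
      have : 0 ≤ ε / 3 * H + W := by positivity
      linarith
    · obtain ⟨φ, hφ1, hφ2⟩ := hφ m hmS
      rw [Finset.sum_congr rfl fun h hh => hφ2 h (Finset.mem_range.1 hh)]
      have := hW φ hφ1 H
      have : (0 : ℝ) ≤ if m ∈ t then (H : ℝ) else 0 := by positivity
      linarith
  have h1 := norm_sum_le_of_le _ hwin
  have h2 : ∑ m ∈ Finset.range N, (if m ∈ t then (H : ℝ) else 0) ≤ t.card * H := by
    rw [← Finset.sum_filter, Finset.sum_const, nsmul_eq_mul]
    gcongr
    intro m hm
    exact (Finset.mem_filter.1 hm).2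
  rw [Finset.sum_add_distrib, Finset.sum_const, Finset.card_range, nsmul_eq_mul] at h1
  have h3 := norm_smul_sum_sub_sum_shift_le g hg N H
  have h4 := norm_le_norm_add_norm_sub' ((H : ℂ) * ∑ n ∈ Finset.range N, g n)
    (∑ n ∈ Finset.range N, ∑ h ∈ Finset.range H, g (n + h))
  rw [norm_mul, Complex.norm_natCast] at h4
  have h5 : (t.card : ℝ) * H ≤ (ε / 3 * N + C) * H := by gcongr
  have h6 : (N : ℝ) * W ≤ N * (ε / 3 * H) := by gcongr; linarith
  refine le_of_mul_le_mul_left (?_ : (H : ℝ) * _ ≤ H * _) hHpos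
  linarith

section Pieces

variable (B : ℕ → ℕ)

/-- The index of the block `[B k, B (k + 1))` containing `n`. -/
def blockIndex (n : ℕ) : ℕ := Nat.findGreatest (fun k => B k ≤ n) n

/-- The sequence equal to `φ k` inside the open block `(B k, B (k + 1))`, and zero elsewhere. -/
noncomputable def piecewisePhase (φ : ℕ → ℕ → Circle) (n : ℕ) : ℂ :=
  open Classical in if n ∈ Set.range B ∪ {0} then 0 else (φ (blockIndex B n) n : ℂ)

variable {B}

lemma blockIndex_eq (hB : StrictMono B) {k n : ℕ} (h1 : B k ≤ n) (h2 : n < B (k + 1)) :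
    blockIndex B n = k := by
  rw [blockIndex, Nat.findGreatest_eq_iff]
  refine ⟨(hB.le_apply).trans h1, fun _ => h1, fun j hj _ h => ?_⟩
  exact absurd (h2.trans_le ((hB.monotone hj).trans h)) (lt_irrefl _)

lemma blockIndex_le (hB0 : B 0 = 1) {n : ℕ} (hn : 1 ≤ n) : B (blockIndex B n) ≤ n :=
  Nat.findGreatest_spec (P := fun k => B k ≤ n) (Nat.zero_le n) (by simpa [hB0] using hn)

lemma lt_blockIndex_succ (hB : StrictMono B) (n : ℕ) : n < B (blockIndex B n + 1) := by
  by_contra! h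
  have h1 : blockIndex B n + 1 ≤ n := (hB.le_apply).trans h
  exact Nat.findGreatest_is_greatest (P := fun k => B k ≤ n) (Nat.lt_succ_self _) h1 h

lemma piecewisePhase_eq (hB : StrictMono B) (φ : ℕ → ℕ → Circle) {k n : ℕ}
    (h1 : B k < n) (h2 : n < B (k + 1)) : piecewisePhase B φ n = φ k n := by
  rw [piecewisePhase, if_neg, blockIndex_eq hB h1.le h2]
  rintro (⟨j, rfl⟩ | h)
  · have := hB.lt_iff_lt.1 h1
    have := hB.lt_iff_lt.1 h2
    omega
  · simp only [Set.mem_singleton_iff] at h; omega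

lemma norm_piecewisePhase_le (φ : ℕ → ℕ → Circle) (n : ℕ) : ‖piecewisePhase B φ n‖ ≤ 1 := by
  rw [piecewisePhase]
  split_ifs
  · simp
  · exact (Circle.norm_coe _).le

lemma exists_block_of_window (hB : StrictMono B) (hB0 : B 0 = 1) {x M : ℕ}
    (h : ∀ s ∈ Set.range B ∪ {0}, ¬ (x ≤ s ∧ s < x + M)) (hM : 0 < M) :
    ∃ k, ∀ n, x ≤ n → n < x + M → B k < n ∧ n < B (k + 1) := by
  have hx : 1 ≤ x := by
    have := h 0 (by simp)
    omega
  refine ⟨blockIndex B x, fun n h1 h2 => ?_⟩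
  have h3 := blockIndex_le hB0 hx
  have h4 := lt_blockIndex_succ hB x
  have h5 := h (B (blockIndex B x)) (by simp)
  have h6 := h (B (blockIndex B x + 1)) (by simp)
  omega

lemma sum_range_piecewisePhase (hB : StrictMono B) (hB0 : B 0 = 1) (φ : ℕ → ℕ → Circle)
    (u : ℕ → ℂ) (K : ℕ) :
    ∑ n ∈ Finset.range (B K), piecewisePhase B φ n * u n
      = ∑ k ∈ Finset.range K, ∑ n ∈ Finset.Ico (B k + 1) (B (k + 1)), (φ k n : ℂ) * u n := by
  induction K with
  | zero => simp [hB0, piecewisePhase]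
  | succ K ih =>
    have hlt : B K < B (K + 1) := hB (Nat.lt_succ_self K)
    rw [Finset.sum_range_succ, ← ih, ← Finset.sum_range_add_sum_Ico _ hlt.le,
      Finset.sum_eq_sum_Ico_succ_bot hlt]
    have h0 : piecewisePhase B φ (B K) = 0 := by simp [piecewisePhase]
    rw [h0, zero_mul, zero_add]
    congr 1
    refine Finset.sum_congr rfl fun n hn => ?_
    rw [Finset.mem_Ico] at hn
    rw [piecewisePhase_eq hB φ (by omega) hn.2]

end Pieces

/-- Multiplicative functions are orthogonal on average to polynomial phases along blocks of length
tending to infinity, when the phases share a leading coefficient of infinite order. -/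
lemma norm_sum_blocks_le {B : ℕ → ℕ} (hB : StrictMono B) (hB0 : B 0 = 1)
    (hgap : Tendsto (fun k => B (k + 1) - B k) atTop atTop)
    {u : ℕ → ℂ} (hmul : ∀ m n : ℕ, Nat.Coprime m n → u (m * n) = u m * u n)
    (hu : ∀ n, ‖u n‖ ≤ 1) {d : ℕ} {w : Circle} (hw : ∀ k : ℕ, 0 < k → w ^ k ≠ 1)
    {φ : ℕ → ℕ → Circle} (hφ : ∀ k, IsPolySeq (d + 1) w (φ k)) {ε : ℝ} (hε : 0 < ε) :
    ∃ C : ℝ, 0 ≤ C ∧ ∀ K : ℕ, ‖∑ k ∈ Finset.range K,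
      ∑ n ∈ Finset.Ico (B k + 1) (B (k + 1)), (φ k n : ℂ) * u n‖ ≤ ε * B K + C := by
  refine (katai_criterion (norm_piecewisePhase_le (B := B) φ) hmul hu ?_ hε).imp
    fun C hC => ⟨hC.1, fun K => sum_range_piecewisePhase hB hB0 φ u K ▸ hC.2 (B K)⟩
  intro p q hp hq hpq δ hδ
  have hpqd : p ^ (d + 1) ≠ q ^ (d + 1) := fun h => hpq (Nat.pow_left_injective d.succ_ne_zero h)
  have hw' : ∀ k : ℕ, 0 < k → (w ^ p ^ (d + 1) / w ^ q ^ (d + 1)) ^ k ≠ 1 := by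
    have hinj : ∀ a b : ℕ, a < b → w ^ a ≠ w ^ b := fun a b hab h => by
      refine hw (b - a) (by omega) ?_
      rw [pow_sub _ hab.le, h, mul_inv_cancel]
    intro k hk h
    rw [div_pow, div_eq_one, ← pow_mul, ← pow_mul] at h
    rcases lt_trichotomy (p ^ (d + 1) * k) (q ^ (d + 1) * k) with h1 | h1 | h1
    · exact hinj _ _ h1 h
    · exact hpqd (Nat.eq_of_mul_eq_mul_right hk h1)
    · exact hinj _ _ h1 h.symm
  refine norm_sum_le_of_locally_polySeq (d := d) (fun n => ?_) hw' (fun H => ?_) hδ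
  · rw [norm_mul, RCLike.norm_conj]
    exact mul_le_one₀ (norm_piecewisePhase_le _ _) (norm_nonneg _) (norm_piecewisePhase_le _ _)
  rcases Nat.eq_zero_or_pos H with rfl | hH
  · refine ⟨{0}, IsSparse.singleton 0, fun m _ => ⟨_, ((hφ 0).dilate p).div ((hφ 0).dilate q), ?_⟩⟩
    exact fun h hh => absurd hh (Nat.not_lt_zero _)
  have hS : IsSparse (Set.range B ∪ {0}) := (IsSparse.range_of_gap hgap).union (.singleton 0)
  refine ⟨_, (hS.window hp.pos H).union (hS.window hq.pos H), fun m hm => ?_⟩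
  rw [Set.mem_union, not_or] at hm
  have hblock : ∀ r : ℕ, 0 < r → (¬ ∃ s ∈ Set.range B ∪ {0}, r * m ≤ s ∧ s < r * m + r * H) →
      ∃ ψ : ℕ → Circle, IsPolySeq (d + 1) (w ^ r ^ (d + 1)) ψ ∧
        ∀ h < H, piecewisePhase B φ (r * (m + h)) = ψ h := by
    intro r hr hs
    obtain ⟨k, hk⟩ := exists_block_of_window hB hB0 (x := r * m) (M := r * H)
      (fun s hsS hlt => hs ⟨s, hsS, hlt⟩) (Nat.mul_pos hr hH)
    refine ⟨_, ((hφ k).shift (r * m)).dilate r, fun h hh => ?_⟩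
    have h1 : r * h < r * H := Nat.mul_lt_mul_of_pos_left hh hr
    obtain ⟨h2, h3⟩ := hk (r * h + r * m) (by omega) (by omega)
    rw [mul_add, add_comm]
    exact piecewisePhase_eq hB φ h2 h3
  obtain ⟨ψ, hψ, hψe⟩ := hblock p hp.pos hm.1
  obtain ⟨ψ', hψ', hψe'⟩ := hblock q hq.pos hm.2
  refine ⟨_, hψ.div hψ', fun h hh => ?_⟩
  rw [hψe h hh, hψe' h hh, div_eq_mul_inv, Circle.coe_mul, Circle.coe_inv_eq_conj]

section Orbit

variable {X : Type*} [AddCommGroup X]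

lemma map_iterate_sub_self_add (A : X ≃+ X) (m : ℕ) (x y : X) :
    (fun z => A z - z)^[m] (x + y) = (fun z => A z - z)^[m] x + (fun z => A z - z)^[m] y := by
  exact iterate_map_add ((A : X →+ X) - AddMonoidHom.id X) m x y

/-- Along an orbit of a unipotent affine map, a character is a polynomial phase. -/
lemma isPolySeq_orbit (A : X ≃+ X) (b : X) (m : ℕ) : ∀ η : X → Circle,
    (∀ x y, η (x + y) = η x * η y) → (∀ x, η ((fun z => A z - z)^[m + 1] x) = 1) → ∀ z,
    IsPolySeq (m + 1) (η ((fun z => A z - z)^[m] b)) (fun n => η ((fun x => A x + b)^[n] z)) := by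
  have hstep : ∀ η : X → Circle, (∀ x y, η (x + y) = η x * η y) → ∀ z n,
      η ((fun x => A x + b)^[n + 1] z) / η ((fun x => A x + b)^[n] z)
        = η (A ((fun x => A x + b)^[n] z) - (fun x => A x + b)^[n] z) * η b := by
    intro η hη z n
    rw [Function.iterate_succ_apply', div_eq_iff_eq_mul, ← hη, ← hη]
    congr 1
    abel
  induction m with
  | zero =>
    intro η hη h z n
    have h1 := h ((fun x => A x + b)^[n] z)
    simp only [zero_add, Function.iterate_one] at h1
    simp only [hstep η hη, h1, one_mul, Function.iterate_zero, id]
  | succ m ih =>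
    intro η hη h z
    have h1 := ih (fun x => η (A x - x)) (fun x y => by
      rw [← hη]; congr 1; rw [map_add]; abel) (fun x => by
      rw [← h x, Function.iterate_succ_apply' _ (m + 1)]) z
    have h2 := h1.mul (IsPolySeq.const m (η b))
    rw [mul_one] at h2
    rw [Function.iterate_succ_apply']
    simp only [IsPolySeq] at h2 ⊢
    simpa only [hstep η hη] using h2

end Orbit

/-- On a connected group, a nontrivial character killing `s` takes a value of infinite order at
`b` as soon as `s` and `b` generate a dense subgroup. -/
lemma pow_ne_one_of_dense_closure {X : Type*} [TopologicalSpace X] [ConnectedSpace X]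
    [AddCommGroup X] {s : Set X} {b : X}
    (hdense : Dense ((AddSubgroup.closure (s ∪ {b}) : AddSubgroup X) : Set X))
    {η : X → Circle} (hcont : Continuous fun x => (η x : ℂ))
    (hη : ∀ x y, η (x + y) = η x * η y) (hs : ∀ x ∈ s, η x = 1) (hne : ∃ x, η x ≠ 1)
    {k : ℕ} (hk : 0 < k) : η b ^ k ≠ 1 := by
  intro hb
  have h0 : η 0 = 1 := by simpa using hη 0 0
  have hmem : ∀ x ∈ AddSubgroup.closure (s ∪ {b}), η x ^ k = 1 := by
    intro x hx
    induction hx using AddSubgroup.closure_induction with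
    | mem x hx =>
      rcases hx with hx | rfl
      · rw [hs x hx, one_pow]
      · exact hb
    | zero => rw [h0, one_pow]
    | add x y _ _ hx hy => rw [hη, mul_pow, hx, hy, one_mul]
    | neg x _ hx =>
      have : η (-x) * η x = 1 := by rw [← hη, neg_add_cancel, h0]
      rw [eq_inv_of_mul_eq_one_left this, inv_pow, hx, inv_one]
  have hall : ∀ x, (η x : ℂ) ^ k = 1 := by
    have := Continuous.ext_on hdense (hcont.pow k) (continuous_const (y := (1 : ℂ))) (by
      intro x hx
      exact (Circle.coe_pow (η x) k).symm.trans (Circle.coe_eq_one.2 (hmem x hx)))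
    exact fun x => congrFun this x
  have hfin : (Set.range fun x => (η x : ℂ)).Finite := by
    refine (Polynomial.nthRoots k (1 : ℂ)).toFinset.finite_toSet.subset ?_
    rintro _ ⟨x, rfl⟩
    simp [Polynomial.mem_nthRoots hk, hall x]
  have hsub : (Set.range fun x => (η x : ℂ)).Subsingleton := by
    by_contra h
    rw [Set.not_subsingleton_iff] at h
    exact (isPreconnected_range hcont).infinite_of_nontrivial h hfin
  obtain ⟨x, hx⟩ := hne
  refine hx (Circle.ext ?_)
  rw [← h0]
  exact hsub (Set.mem_range_self x) (Set.mem_range_self 0)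

lemma exists_circle_mul_eq_norm (z : ℂ) : ∃ c : Circle, (c : ℂ) * z = ‖z‖ := by
  rcases eq_or_ne z 0 with rfl | hz
  · exact ⟨1, by simp⟩
  · refine ⟨⟨‖z‖ / z, ?_⟩, ?_⟩
    · simp [Submonoid.unitSphere, hz]
    · exact div_mul_cancel₀ _ hz

/-- **Theorem 4.1.** Let `X` be a compact connected metrizable abelian group, `A` a continuous
group automorphism of `X`, `b ∈ X`, and `Tx = Ax + b`. Assume the subgroup generated by
`(A−I)X` and `b` is dense in `X`, and every continuous character `χ` of `X` satisfies
`χ ∘ (A−I)^m = 1` for some `m ≥ 0`. Then for every multiplicative `u`, `|u| ≤ 1`, every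
nontrivial continuous character `χ`, every sequence `1 = b₁ < b₂ < ⋯` with
`b_{k+1} − b_k → ∞` and every sequence `(z_k)` in `X`,
`(1/b_{K+1}) ∑_{k ≤ K} |∑_{b_k+1 ≤ n < b_{k+1}} χ(Tⁿ z_k) u(n)| → 0`. -/
theorem character_orthogonality_affine_unipotent
    {X : Type*} [TopologicalSpace X] [CompactSpace X] [ConnectedSpace X]
    [TopologicalSpace.MetrizableSpace X] [AddCommGroup X] [IsTopologicalAddGroup X]
    [MeasurableSpace X] [BorelSpace X]
    (A : X ≃+ X) (hAcont : Continuous A) (hAinvcont : Continuous A.symm) (b : X)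
    (T : X → X) (hT : T = fun x => A x + b)
    (hdense : Dense ((AddSubgroup.closure (Set.range (fun x => A x - x) ∪ {b}) :
      AddSubgroup X) : Set X))
    (hchar : ∀ χ : X → ℂ, Continuous χ → (∀ x y, χ (x + y) = χ x * χ y) →
      (∀ x, ‖χ x‖ = 1) →
      ∃ m : ℕ, ∀ x, χ ((fun z => A z - z)^[m] x) = 1)
    (u : ℕ → ℂ) (hu_mult : ∀ m n : ℕ, Nat.Coprime m n → u (m * n) = u m * u n)
    (hu_bd : ∀ n, ‖u n‖ ≤ 1)
    (χ : X → ℂ) (hχcont : Continuous χ) (hχhom : ∀ x y, χ (x + y) = χ x * χ y)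
    (hχmod : ∀ x, ‖χ x‖ = 1) (hχne : ∃ x, χ x ≠ 1)
    (bseq : ℕ → ℕ) (hb1 : bseq 1 = 1) (hbmono : ∀ k ≥ 1, bseq k < bseq (k + 1))
    (hbgap : Tendsto (fun k : ℕ => bseq (k + 1) - bseq k) atTop atTop)
    (z : ℕ → X) :
    Tendsto (fun K : ℕ => (bseq (K + 1) : ℝ)⁻¹ *
        ∑ k ∈ Finset.Icc 1 K,
          ‖∑ n ∈ Finset.Ico (bseq k + 1) (bseq (k + 1)), χ (T^[n] (z k)) * u n‖)
      atTop (nhds 0) := by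

  subst hT
  set N : X → X := fun z => A z - z with hNdef
  have hNcont : Continuous N := hAcont.sub continuous_id
  have hNadd : ∀ m x y, N^[m] (x + y) = N^[m] x + N^[m] y := map_iterate_sub_self_add A
  let η : X → Circle := fun x => ⟨χ x, by simp [Submonoid.unitSphere, hχmod x]⟩
  have hηχ : ∀ x, (η x : ℂ) = χ x := fun _ => rfl
  have hη : ∀ x y, η (x + y) = η x * η y := fun x y => Circle.ext (hχhom x y)
  have hη1 : ∀ x, η x = 1 ↔ χ x = 1 := fun x => by rw [← Circle.coe_eq_one, hηχ]
  -- the exact order of unipotency of `χ`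
  obtain ⟨m, hm, x₀, hx₀⟩ : ∃ m, (∀ x, η (N^[m + 1] x) = 1) ∧ ∃ x, η (N^[m] x) ≠ 1 := by
    classical
    have hex : ∃ m : ℕ, ∀ x, χ (N^[m] x) = 1 := hchar χ hχcont hχhom hχmod
    obtain ⟨m, hm⟩ : ∃ m, Nat.find hex = m + 1 := by
      refine Nat.exists_eq_succ_of_ne_zero fun h => ?_
      obtain ⟨x, hx⟩ := hχne
      have := Nat.find_spec hex x
      rw [h] at this
      exact hx this
    refine ⟨m, fun x => (hη1 _).2 (hm ▸ Nat.find_spec hex x), ?_⟩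
    have := Nat.find_min hex (m := m) (by omega)
    push Not at this
    simpa only [ne_eq, hη1] using this
  have hw : ∀ k : ℕ, 0 < k → η (N^[m] b) ^ k ≠ 1 := fun k hk =>
    pow_ne_one_of_dense_closure (η := fun x => η (N^[m] x)) hdense
      (hχcont.comp (hNcont.iterate m)) (fun x y => by rw [hNadd, hη])
      (by
        rintro _ ⟨x, rfl⟩
        have := hm x
        rwa [Function.iterate_succ_apply] at this) ⟨x₀, hx₀⟩ hk
  set B : ℕ → ℕ := fun k => bseq (k + 1) with hBdef
  have hB : StrictMono B := strictMono_nat_of_lt_succ fun k => hbmono (k + 1) (by omega)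
  have hgap : Tendsto (fun k => B (k + 1) - B k) atTop atTop :=
    hbgap.comp (tendsto_add_atTop_nat 1)
  choose c hc using fun k => exists_circle_mul_eq_norm
    (∑ n ∈ Finset.Ico (B k + 1) (B (k + 1)), χ ((fun x => A x + b)^[n] (z (k + 1))) * u n)
  have hφ : ∀ k, IsPolySeq (m + 1) (η (N^[m] b))
      (fun n => c k * η ((fun x => A x + b)^[n] (z (k + 1)))) := fun k => by
    simpa using (IsPolySeq.const m (c k)).mul (isPolySeq_orbit A b m η hη hm (z (k + 1)))
  have hsum : ∀ K, ‖∑ k ∈ Finset.range K, ∑ n ∈ Finset.Ico (B k + 1) (B (k + 1)),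
      ((c k * η ((fun x => A x + b)^[n] (z (k + 1))) : Circle) : ℂ) * u n‖
      = ∑ k ∈ Finset.Icc 1 K, ‖∑ n ∈ Finset.Ico (bseq k + 1) (bseq (k + 1)),
          χ ((fun x => A x + b)^[n] (z k)) * u n‖ := by
    intro K
    have e : ∀ k, ∑ n ∈ Finset.Ico (B k + 1) (B (k + 1)),
        ((c k * η ((fun x => A x + b)^[n] (z (k + 1))) : Circle) : ℂ) * u n
        = (‖∑ n ∈ Finset.Ico (B k + 1) (B (k + 1)),
          χ ((fun x => A x + b)^[n] (z (k + 1))) * u n‖ : ℂ) := fun k => by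
      rw [← hc k, Finset.mul_sum]
      exact Finset.sum_congr rfl fun n _ => by rw [Circle.coe_mul, hηχ, mul_assoc]
    simp_rw [e]
    rw [← Complex.ofReal_sum, Complex.norm_real, Real.norm_of_nonneg
      (Finset.sum_nonneg fun _ _ => norm_nonneg _), ← Finset.Ico_add_one_right_eq_Icc,
      Finset.sum_Ico_eq_sum_range]
    simp [hBdef, add_comm 1]
  rw [Metric.tendsto_atTop]
  intro ε hε
  obtain ⟨C, hC, hbound⟩ := norm_sum_blocks_le hB hb1 hgap hu_mult hu_bd hw hφ (half_pos hε)
  obtain ⟨K₀, hK₀⟩ := exists_nat_gt (C / (ε / 2))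
  refine ⟨K₀, fun K hK => ?_⟩
  have hBK : (K : ℝ) ≤ bseq (K + 1) := by exact_mod_cast hB.le_apply (x := K)
  have hK' : (K₀ : ℝ) ≤ K := by exact_mod_cast hK
  have hlt : C / (ε / 2) < bseq (K + 1) := by linarith
  have hpos : (0 : ℝ) < bseq (K + 1) := lt_of_le_of_lt (by positivity) hlt
  rw [div_lt_iff₀ (by positivity)] at hlt
  have h1 := hbound K
  rw [hsum] at h1
  have hnn : 0 ≤ ∑ k ∈ Finset.Icc 1 K, ‖∑ n ∈ Finset.Ico (bseq k + 1) (bseq (k + 1)),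
      χ ((fun x => A x + b)^[n] (z k)) * u n‖ := Finset.sum_nonneg fun _ _ => norm_nonneg _
  rw [Real.dist_0_eq_abs, abs_of_nonneg (by positivity), inv_mul_lt_iff₀ hpos]
  simp only [hBdef] at h1
  linarith
end

section
/- Let 0 < δ < 1, let X = {0,1}^ℤ with the product (Bernoulli) measure μ = (δ, 1−δ)^{⊗ℤ}, and let T : X → X be the left shift. Then (X,μ,T) does not have the AOP property. -/
open MeasureTheory Filter

open scoped Topology ENNReal

section Mixing

variable {α β : Type*} [MeasurableSpace α] [MeasurableSpace β]

/-- Setwise convergence of uniformly dominated measures can be tested on a generating π-system. -/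
lemma tendsto_measureReal_of_isPiSystem {C : Set (Set α)}
    (hgen : ‹MeasurableSpace α› = MeasurableSpace.generateFrom C) (hC : IsPiSystem C)
    {ν : ℕ → Measure α} {ν' ρ : Measure α} [IsFiniteMeasure ν'] [IsFiniteMeasure ρ]
    (hle : ∀ n, ν n ≤ ρ)
    (huniv : Tendsto (fun n => (ν n).real Set.univ) atTop (𝓝 (ν'.real Set.univ)))
    (hbasic : ∀ s ∈ C, Tendsto (fun n => (ν n).real s) atTop (𝓝 (ν'.real s)))
    {s : Set α} (hs : MeasurableSet s) :
    Tendsto (fun n => (ν n).real s) atTop (𝓝 (ν'.real s)) := by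
  have hfin : ∀ n, IsFiniteMeasure (ν n) := fun n => isFiniteMeasure_of_le ρ (hle n)
  induction s, hs using MeasurableSpace.induction_on_inter hgen hC with
  | empty => simp
  | basic t ht => exact hbasic t ht
  | compl t ht ih =>
    simp only [measureReal_compl ht]
    exact huniv.sub ih
  | iUnion f hd hm ih =>
    have hsum : ∀ (m : Measure α) [IsFiniteMeasure m],
        HasSum (fun i => m.real (f i)) (m.real (⋃ i, f i)) := by
      intro m _
      have h := ENNReal.hasSum_toReal (f := fun i => m (f i))
        (by rw [← measure_iUnion hd hm]; exact measure_ne_top _ _)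
      rwa [← ENNReal.tsum_toReal_eq (fun i => measure_ne_top _ _), ← measure_iUnion hd hm] at h
    have heq : ∀ (m : Measure α) [IsFiniteMeasure m],
        m.real (⋃ i, f i) = ∑' i, m.real (f i) := fun m _ => (hsum m).tsum_eq.symm
    rw [heq ν']
    simp only [fun n => heq (ν n)]
    refine tendsto_tsum_of_dominated_convergence (hsum ρ).summable ih
      (Eventually.of_forall fun n i => ?_)
    rw [Real.norm_of_nonneg measureReal_nonneg]
    exact ENNReal.toReal_mono (measure_ne_top _ _) (hle n _)

/-- Strong mixing of a measure-preserving transformation. -/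
structure StrongMixing (T : α → α) (μ : Measure α) : Prop extends MeasurePreserving T μ μ where
  tendsto_inter : ∀ A B : Set α, MeasurableSet A → MeasurableSet B →
    Tendsto (fun n => μ.real (A ∩ T^[n] ⁻¹' B)) atTop (𝓝 (μ.real A * μ.real B))

namespace StrongMixing

variable {T : α → α} {μ : Measure α} {S : β → β} {ν : Measure β}

lemma of_isPiSystem [IsProbabilityMeasure μ] (hT : MeasurePreserving T μ μ) {C : Set (Set α)}
    (hgen : ‹MeasurableSpace α› = MeasurableSpace.generateFrom C) (hC : IsPiSystem C)
    (h : ∀ A ∈ C, ∀ B ∈ C,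
      Tendsto (fun n => μ.real (A ∩ T^[n] ⁻¹' B)) atTop (𝓝 (μ.real A * μ.real B))) :
    StrongMixing T μ := by
  have hmeas : ∀ A ∈ C, MeasurableSet A := fun A hA => by
    rw [hgen]; exact MeasurableSpace.measurableSet_generateFrom hA
  have hiter : ∀ n, Measurable T^[n] := hT.measurable.iterate
  have hright : ∀ A ∈ C, ∀ B, MeasurableSet B →
      Tendsto (fun n => μ.real (A ∩ T^[n] ⁻¹' B)) atTop (𝓝 (μ.real A * μ.real B)) := by
    intro A hA B hB
    have hreal : ∀ n {B}, MeasurableSet B →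
        ((μ.restrict A).map T^[n]).real B = μ.real (A ∩ T^[n] ⁻¹' B) := by
      intro n B hB
      rw [map_measureReal_apply (hiter n) hB, measureReal_restrict_apply (hiter n hB),
        Set.inter_comm]
    have hlim : ∀ B, ((μ A).toNNReal • μ).real B = μ.real A * μ.real B := by
      intro B; simp [measureReal_def, ENNReal.smul_def]
    have := tendsto_measureReal_of_isPiSystem hgen hC (ν := fun n => (μ.restrict A).map T^[n])
      (ν' := (μ A).toNNReal • μ) (ρ := μ)
      (fun n => by
        conv_rhs => rw [← (hT.iterate n).map_eq]
        exact Measure.map_mono Measure.restrict_le_self (hiter n))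
      (by simp [hreal _ MeasurableSet.univ, hlim])
      (fun B hB => by simpa [hreal _ (hmeas B hB), hlim] using h A hA B hB) hB
    simpa [hreal _ hB, hlim] using this
  refine ⟨hT, fun A B hA hB => ?_⟩
  have hlim : ∀ A, ((μ B).toNNReal • μ).real A = μ.real A * μ.real B := by
    intro A; simp [measureReal_def, ENNReal.smul_def, mul_comm]
  have := tendsto_measureReal_of_isPiSystem hgen hC (ν := fun n => μ.restrict (T^[n] ⁻¹' B))
      (ν' := (μ B).toNNReal • μ) (ρ := μ) (fun n => Measure.restrict_le_self)
      (by simp [hlim, measureReal_def, (hT.iterate _).measure_preimage hB.nullMeasurableSet])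
      (fun A hA => by
        simpa [measureReal_restrict_apply (hmeas A hA), hlim] using hright A hA B hB) hA
  simpa [measureReal_restrict_apply hA, hlim] using this

lemma iterate (h : StrongMixing T μ) {r : ℕ} (hr : 0 < r) : StrongMixing T^[r] μ := by
  refine ⟨h.toMeasurePreserving.iterate r, fun A B hA hB => ?_⟩
  simp only [← Function.iterate_mul]
  exact (h.tendsto_inter A B hA hB).comp (tendsto_id.const_mul_atTop' hr)

lemma prodMap [IsProbabilityMeasure μ] [IsProbabilityMeasure ν]
    (hT : StrongMixing T μ) (hS : StrongMixing S ν) :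
    StrongMixing (Prod.map T S) (μ.prod ν) := by
  refine of_isPiSystem (hT.toMeasurePreserving.prod hS.toMeasurePreserving)
    generateFrom_prod.symm isPiSystem_prod ?_
  rintro _ ⟨A₁, hA₁, A₂, hA₂, rfl⟩ _ ⟨B₁, hB₁, B₂, hB₂, rfl⟩
  simp only [Prod.map_iterate, Set.preimage_prod_map_prod,
    Set.prod_inter_prod, measureReal_prod_prod]
  convert (hT.tendsto_inter A₁ B₁ hA₁ hB₁).mul (hS.tendsto_inter A₂ B₂ hA₂ hB₂) using 2
  ring

lemma ergodic [IsProbabilityMeasure μ] (h : StrongMixing T μ) : Ergodic T μ := by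
  refine ⟨h.toMeasurePreserving, ⟨fun A hA hinv => ?_⟩⟩
  have hiter : ∀ n, T^[n] ⁻¹' A = A := fun n => by
    induction n with
    | zero => rfl
    | succ n ih => rw [Function.iterate_succ, Set.preimage_comp, ih, hinv]
  have hsq : μ.real A = μ.real A * μ.real A := by
    have := h.tendsto_inter A A hA hA
    simp only [hiter, Set.inter_self] at this
    exact tendsto_nhds_unique tendsto_const_nhds this
  have h01 : μ.real A = 0 ∨ μ.real A = 1 := by
    rcases eq_or_ne (μ.real A) 0 with h0 | h0
    · exact .inl h0
    · exact .inr (mul_left_cancel₀ h0 (by rw [← hsq, mul_one]))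
  rw [eventuallyConst_set']
  rcases h01 with h0 | h1
  · left
    rwa [measureReal_eq_zero_iff, ← ae_eq_empty] at h0
  · right
    rw [ae_eq_univ, prob_compl_eq_zero_iff hA]
    simpa [measureReal_def, ENNReal.toReal_eq_one_iff] using h1

end StrongMixing

end Mixing

section Bernoulli

variable {ι κ α : Type*}

/-- The set of sequences agreeing with `a` on the finite set `s`. -/
def agreeOn (s : Finset ι) (a : ι → α) : Set (ι → α) := {x | ∀ i ∈ s, x i = a i}

/-- The measure `μ` on sequences is the product measure with weights `p`. -/
def IsBernoulli [MeasurableSpace α] (p : α → ℝ≥0∞) (μ : Measure (ι → α)) : Prop :=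
  ∀ (s : Finset ι) (a : ι → α), μ (agreeOn s a) = ∏ i ∈ s, p (a i)

lemma agreeOn_inter_agreeOn [DecidableEq ι] (s t : Finset ι) (a b : ι → α)
    (h : ∀ i ∈ s, i ∈ t → a i = b i) :
    agreeOn s a ∩ agreeOn t b = agreeOn (s ∪ t) (fun i => if i ∈ s then a i else b i) := by
  ext x
  simp only [agreeOn, Set.mem_inter_iff, Set.mem_ofPred_eq, Finset.mem_union]
  grind

lemma isPiSystem_agreeOn : IsPiSystem {A : Set (ι → α) | ∃ s a, A = agreeOn s a} := by
  classical
  rintro _ ⟨s, a, rfl⟩ _ ⟨t, b, rfl⟩ ⟨x, hxa, hxb⟩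
  exact ⟨_, _, agreeOn_inter_agreeOn s t a b fun i hs ht => (hxa i hs).symm.trans (hxb i ht)⟩

lemma setOf_reindex_eq_agreeOn [Nonempty κ] [DecidableEq ι] {e : κ → ι} {t : Finset κ}
    (he : Set.InjOn e t) (b : κ → α) :
    {x : ι → α | ∀ i ∈ t, x (e i) = b i} =
      agreeOn (t.image e) (b ∘ Function.invFunOn e t) := by
  ext x
  simp only [agreeOn, Set.mem_ofPred_eq, Finset.mem_image, forall_exists_index, and_imp,
    forall_apply_eq_imp_iff₂, Function.comp_apply]
  exact forall₂_congr fun i hi => by rw [he.leftInvOn_invFunOn hi]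

/-- The left shift on two-sided sequences. -/
def leftShift (x : ℤ → α) : ℤ → α := fun i => x (i + 1)

lemma leftShift_iterate (n : ℕ) (x : ℤ → α) (i : ℤ) : leftShift^[n] x i = x (i + n) := by
  induction n generalizing x with
  | zero => simp
  | succ n ih =>
    rw [Function.iterate_succ_apply, ih, leftShift]
    push_cast
    ring_nf

/-- Overwrite the coordinates of the second sequence at multiples of `s` by the coordinates of the
first one at the corresponding multiples of `r`. -/
def splice (r s : ℕ) (q : (ℤ → α) × (ℤ → α)) : (ℤ → α) × (ℤ → α) :=
  (q.1, fun j => if (s : ℤ) ∣ j then q.1 (r * (j / s)) else q.2 j)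

lemma semiconj_splice (r : ℕ) {s : ℕ} (hs : 0 < s) :
    Function.Semiconj (splice (α := α) r s) (Prod.map leftShift^[r] leftShift^[s])
      (Prod.map leftShift^[r] leftShift^[s]) := by
  rintro ⟨x, w⟩
  refine Prod.ext rfl (funext fun j => ?_)
  have hs' : (s : ℤ) ≠ 0 := by exact_mod_cast hs.ne'
  simp only [splice, Prod.map_apply, leftShift_iterate, dvd_add_self_right,
    Int.add_ediv_of_dvd_right dvd_rfl, Int.ediv_self hs', mul_add, mul_one]

variable [MeasurableSpace α]

lemma measurableSet_agreeOn [MeasurableSingletonClass α] (s : Finset ι) (a : ι → α) :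
    MeasurableSet (agreeOn s a) := by
  have : agreeOn s a = ⋂ i ∈ s, (fun x : ι → α => x i) ⁻¹' {a i} := by
    ext x; simp [agreeOn]
  rw [this]
  exact Finset.measurableSet_biInter _ fun i _ => measurable_pi_apply i (measurableSet_singleton _)

lemma generateFrom_agreeOn [Countable α] [MeasurableSingletonClass α] :
    (MeasurableSpace.pi : MeasurableSpace (ι → α)) =
      MeasurableSpace.generateFrom {A | ∃ s a, A = agreeOn s a} := by
  apply le_antisymm
  · refine iSup_le fun i => ?_
    rw [← measurable_iff_comap_le]
    refine @measurable_to_countable' _ _ _ _ (MeasurableSpace.generateFrom _) _ fun c => ?_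
    refine MeasurableSpace.measurableSet_generateFrom ⟨{i}, fun _ => c, ?_⟩
    ext x; simp [agreeOn]
  · refine MeasurableSpace.generateFrom_le ?_
    rintro _ ⟨s, a, rfl⟩
    exact measurableSet_agreeOn s a

namespace IsBernoulli

variable {p : α → ℝ≥0∞} {μ : Measure (ι → α)}

lemma measure_inter (h : IsBernoulli p μ) {s t : Finset ι} (hst : Disjoint s t) (a b : ι → α) :
    μ (agreeOn s a ∩ agreeOn t b) = μ (agreeOn s a) * μ (agreeOn t b) := by
  classical
  rw [agreeOn_inter_agreeOn s t a b fun i hs ht => (Finset.disjoint_left.1 hst hs ht).elim, h, h, h,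
    Finset.prod_union hst]
  congr 1
  · exact Finset.prod_congr rfl fun i hi => by simp [hi]
  · exact Finset.prod_congr rfl fun i hi => by simp [Finset.disjoint_right.1 hst hi]

lemma measure_reindex [Nonempty κ] (h : IsBernoulli p μ) {e : κ → ι} {t : Finset κ}
    (he : Set.InjOn e t) (b : κ → α) :
    μ {x | ∀ i ∈ t, x (e i) = b i} = ∏ i ∈ t, p (b i) := by
  classical
  rw [setOf_reindex_eq_agreeOn he, h, Finset.prod_image he]
  exact Finset.prod_congr rfl fun i hi => by
    rw [Function.comp_apply, he.leftInvOn_invFunOn hi]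

lemma eq [Countable α] [MeasurableSingletonClass α] [IsProbabilityMeasure μ]
    {ν : Measure (ι → α)} [IsProbabilityMeasure ν]
    (hμ : IsBernoulli p μ) (hν : IsBernoulli p ν) : μ = ν := by
  refine ext_of_generate_finite _ generateFrom_agreeOn isPiSystem_agreeOn ?_ (by simp)
  rintro _ ⟨s, a, rfl⟩
  rw [hμ, hν]

end IsBernoulli

lemma measurable_leftShift : Measurable (leftShift : (ℤ → α) → ℤ → α) :=
  measurable_pi_lambda _ fun _ => measurable_pi_apply _

lemma IsBernoulli.strongMixing_leftShift [Countable α] [MeasurableSingletonClass α]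
    {p : α → ℝ≥0∞} {μ : Measure (ℤ → α)} [IsProbabilityMeasure μ] (h : IsBernoulli p μ) :
    StrongMixing leftShift μ := by
  have hmp : MeasurePreserving leftShift μ μ := by
    have := Measure.isProbabilityMeasure_map (μ := μ) (measurable_leftShift (α := α)).aemeasurable
    refine ⟨measurable_leftShift, IsBernoulli.eq (p := p) (fun s a => ?_) h⟩
    rw [Measure.map_apply measurable_leftShift (measurableSet_agreeOn s a)]
    exact h.measure_reindex (e := fun i : ℤ => i + 1) (add_left_injective 1).injOn a
  refine StrongMixing.of_isPiSystem hmp generateFrom_agreeOn isPiSystem_agreeOn ?_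
  rintro _ ⟨s, a, rfl⟩ _ ⟨t, b, rfl⟩
  refine tendsto_const_nhds.congr' ?_
  obtain ⟨M, hM⟩ := s.bddAbove
  obtain ⟨L, hL⟩ := t.bddBelow
  filter_upwards [eventually_gt_atTop (M - L).toNat] with n hn
  have hinj : Set.InjOn (fun i : ℤ => i + n) t := (add_left_injective (n : ℤ)).injOn
  have hpre : leftShift^[n] ⁻¹' agreeOn t b = {x : ℤ → α | ∀ i ∈ t, x (i + n) = b i} := by
    ext x; simp [agreeOn, leftShift_iterate]
  have hdisj : Disjoint s (t.image fun i : ℤ => i + n) := by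
    rw [Finset.disjoint_left]
    intro i hi hi'
    obtain ⟨j, hj, rfl⟩ := Finset.mem_image.1 hi'
    have h1 := hM hi
    have h2 := hL hj
    omega
  rw [hpre, setOf_reindex_eq_agreeOn hinj, measureReal_def, measureReal_def, measureReal_def,
    h.measure_inter hdisj, ← setOf_reindex_eq_agreeOn hinj, h.measure_reindex hinj, h t,
    ENNReal.toReal_mul]

lemma measurable_splice (r s : ℕ) : Measurable (splice (α := α) r s) := by
  refine measurable_fst.prodMk (measurable_pi_lambda _ fun j => ?_)
  split_ifs <;> fun_prop

lemma IsBernoulli.map_snd_splice [Countable α] [MeasurableSingletonClass α]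
    {p : α → ℝ≥0∞} {μ : Measure (ℤ → α)} [IsProbabilityMeasure μ] (h : IsBernoulli p μ)
    {r s : ℕ} (hr : 0 < r) :
    ((μ.prod μ).map (splice r s)).map Prod.snd = μ := by
  have hm := measurable_splice (α := α) r s
  rw [Measure.map_map measurable_snd hm]
  have := Measure.isProbabilityMeasure_map (μ := μ.prod μ) (measurable_snd.comp hm).aemeasurable
  refine IsBernoulli.eq (p := p) (fun t a => ?_) h
  rw [Measure.map_apply (measurable_snd.comp hm) (measurableSet_agreeOn t a)]
  have hpre : (Prod.snd ∘ splice r s) ⁻¹' agreeOn t a =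
      {x : ℤ → α | ∀ j ∈ t.filter ((s : ℤ) ∣ ·), x (r * (j / s)) = a j} ×ˢ
        agreeOn (t.filter (¬ (s : ℤ) ∣ ·)) a := by
    ext ⟨x, w⟩
    simp only [agreeOn, splice, Set.mem_preimage, Function.comp_apply, Set.mem_ofPred_eq,
      Set.mem_prod, Finset.mem_filter]
    grind
  have hinj : Set.InjOn (fun j : ℤ => (r : ℤ) * (j / s)) (t.filter ((s : ℤ) ∣ ·)) := by
    intro i hi j hj hij
    have hr' : (r : ℤ) ≠ 0 := by exact_mod_cast hr.ne'
    rw [← Int.ediv_mul_cancel (Finset.mem_filter.1 hi).2,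
      ← Int.ediv_mul_cancel (Finset.mem_filter.1 hj).2, mul_left_cancel₀ hr' hij]
  rw [hpre, Measure.prod_prod, h.measure_reindex hinj, h, Finset.prod_filter_mul_prod_filter_not]

end Bernoulli

/-- The indicator of `x 0 = 0`, centred when that event has probability `δ`. -/
noncomputable def centredIndicator (δ : ℝ) (x : ℤ → Fin 2) : ℂ := if x 0 = 0 then 1 - δ else -δ

lemma measurable_centredIndicator (δ : ℝ) : Measurable (centredIndicator δ) :=
  (measurable_of_countable fun c : Fin 2 => if c = 0 then (1 - δ : ℂ) else -δ).comp
    (measurable_pi_apply 0)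

lemma memLp_centredIndicator (δ : ℝ) (μ : Measure (ℤ → Fin 2)) [IsFiniteMeasure μ]
    (q : ℝ≥0∞) : MemLp (centredIndicator δ) q μ := by
  refine MemLp.of_bound (measurable_centredIndicator δ).aestronglyMeasurable
    (‖(1 - δ : ℂ)‖ + ‖(-δ : ℂ)‖) (ae_of_all _ fun x => ?_)
  unfold centredIndicator
  split_ifs <;> simp

lemma integral_centredIndicator {δ : ℝ} (hδ : 0 ≤ δ) {μ : Measure (ℤ → Fin 2)}
    [IsProbabilityMeasure μ] (h : μ {x | x 0 = 0} = ENNReal.ofReal δ) :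
    ∫ x, centredIndicator δ x ∂μ = 0 := by
  have hm : MeasurableSet {x : ℤ → Fin 2 | x 0 = 0} :=
    measurable_pi_apply 0 (measurableSet_singleton 0)
  have heq : centredIndicator δ = fun x => Set.indicator {x | x 0 = 0} (fun _ => (1 : ℂ)) x - δ := by
    ext x
    by_cases hx : x 0 = 0 <;> simp [centredIndicator, hx]
  rw [heq, integral_sub ((integrable_const _).indicator hm) (integrable_const _),
    integral_indicator_const _ hm, measureReal_def, h, ENNReal.toReal_ofReal hδ]
  simp

lemma integral_centredIndicator_mul_conj {δ : ℝ} (hδ : 0 ≤ δ) {μ : Measure (ℤ → Fin 2)}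
    [IsProbabilityMeasure μ] (h : μ {x | x 0 = 0} = ENNReal.ofReal δ) :
    ∫ x, centredIndicator δ x * (starRingEnd ℂ) (centredIndicator δ x) ∂μ =
      ((δ * (1 - δ) : ℝ) : ℂ) := by
  have heq : (fun x => centredIndicator δ x * (starRingEnd ℂ) (centredIndicator δ x)) =
      fun x => (1 - 2 * δ) * centredIndicator δ x + ((δ * (1 - δ) : ℝ) : ℂ) := by
    ext x
    by_cases hx : x 0 = 0 <;> simp [centredIndicator, hx] <;> ring
  have hint : Integrable (centredIndicator δ) μ :=
    memLp_one_iff_integrable.1 (memLp_centredIndicator δ μ 1)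
  rw [heq, integral_add (hint.const_mul _) (integrable_const _), integral_const_mul,
    integral_centredIndicator hδ h]
  simp

/-- **Proposition 5.2 (special case).** The two-sided Bernoulli shift on `{0,1}^ℤ` with
product measure `(δ, 1−δ)^⊗ℤ`, `0 < δ < 1`, does not have the AOP property. -/
theorem bernoulli_shift_not_AOP
    (δ : ℝ) (hδ0 : 0 < δ) (hδ1 : δ < 1)
    (μ : Measure (ℤ → Fin 2)) [IsProbabilityMeasure μ]
    (hμ : ∀ (s : Finset ℤ) (a : ℤ → Fin 2),
      μ {x : ℤ → Fin 2 | ∀ i ∈ s, x i = a i} =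
        ∏ i ∈ s, (if a i = 0 then ENNReal.ofReal δ else ENNReal.ofReal (1 - δ)))
    (T : (ℤ → Fin 2) → (ℤ → Fin 2)) (hT : T = fun x => fun i => x (i + 1)) :
    ¬ AOP T μ := by
  intro hAOP
  have hB : IsBernoulli
      (fun c : Fin 2 => if c = 0 then ENNReal.ofReal δ else ENNReal.ofReal (1 - δ)) μ := hμ
  replace hT : T = leftShift := hT
  subst hT
  have h0 : μ {x | x 0 = 0} = ENNReal.ofReal δ := by simpa using hμ {0} 0
  have hpos : 0 < δ * (1 - δ) := mul_pos hδ0 (sub_pos.2 hδ1)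
  have hmem := memLp_centredIndicator δ μ 2
  have hint := integral_centredIndicator hδ0.le h0
  obtain ⟨N, hN⟩ := hAOP _ _ hmem hmem hint hint (δ * (1 - δ) / 2) (half_pos hpos)
  obtain ⟨r, hNr, hr⟩ := Nat.exists_infinite_primes N
  obtain ⟨s, hrs, hs⟩ := Nat.exists_infinite_primes (r + 1)
  have hm := measurable_splice (α := Fin 2) r s
  have hmix := hB.strongMixing_leftShift
  have herg : Ergodic (Prod.map leftShift^[r] leftShift^[s]) ((μ.prod μ).map (splice r s)) :=
    (hm.measurePreserving (μ.prod μ)).ergodic_of_ergodic_semiconj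
      ((hmix.iterate hr.pos).prodMap (hmix.iterate hs.pos)).ergodic
      ((measurable_leftShift.iterate r).prodMap (measurable_leftShift.iterate s))
      (semiconj_splice r hs.pos)
  have hle := hN r s hr hs (by omega) hNr (by omega) _
    (Measure.isProbabilityMeasure_map hm.aemeasurable)
    (by
      rw [Measure.map_map measurable_fst hm]
      exact measurePreserving_fst.map_eq)
    (hB.map_snd_splice hr.pos) herg
  have hmeas := measurable_centredIndicator δ
  have hsplice : ∀ q : (ℤ → Fin 2) × (ℤ → Fin 2),
      centredIndicator δ (splice r s q).2 = centredIndicator δ q.1 := by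
    intro q; simp [centredIndicator, splice]
  rw [integral_map hm.aemeasurable (by
    refine Measurable.aestronglyMeasurable ?_
    exact (hmeas.comp measurable_fst).mul
      (Complex.continuous_conj.measurable.comp (hmeas.comp measurable_snd)))] at hle
  simp only [hsplice] at hle
  have hfst := integral_fun_fst (μ := μ) (ν := μ)
    (fun x => centredIndicator δ x * (starRingEnd ℂ) (centredIndicator δ x))
  rw [integral_centredIndicator_mul_conj hδ0.le h0] at hfst
  change ‖∫ q : (ℤ → Fin 2) × (ℤ → Fin 2),
    centredIndicator δ q.1 * (starRingEnd ℂ) (centredIndicator δ q.1) ∂μ.prod μ‖ ≤ _ at hle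
  rw [hfst, probReal_univ, one_smul, Complex.norm_real, Real.norm_of_nonneg hpos.le] at hle
  linarith
end
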